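/- Let L be a G-graded field with graded subfields k ⊆ K ⊆ L and k ⊆ l ⊆ L, and suppose the restriction map ψ = ψ_{L/l,K/k} : P_{L/l} → P_{K/k}, O ↦ O ∩ K, is surjective. Let X ⊆ P_{K/k} be a finite union of affine subsets P_{K/k}{A_i} = {O ∈ P_{K/k} : A_i ⊆ O}, where each A_i is a finitely generated graded k-subalgebra of K. If the preimage ψ⁻¹(X) is an affine subset of P_{L/l}, i.e. ψ⁻¹(X) = P_{L/l}{B} = {O ∈ P_{L/l} : B ⊆ O} for some finitely generated graded l-subalgebra B of L, then X itself is affine: X = P_{K/k}{A} for some finitely generated graded k-subalgebra A of K. -/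

import Mathlib

universe u v

/-- A `G`-graded commutative ring structure on `A`: graded pieces `deg g`,
multiplicativity of the grading, and an internal direct sum decomposition
recorded by the homogeneous-component function `comp`. -/
structure GradedStr (G : Type u) [CommGroup G] (A : Type v) [CommRing A] where
  deg : G → AddSubgroup A
  one_mem : (1 : A) ∈ deg 1
  mul_mem : ∀ {g h : G} {a b : A}, a ∈ deg g → b ∈ deg h → a * b ∈ deg (g * h)
  comp : A → G → A
  comp_mem : ∀ a g, comp a g ∈ deg g
  comp_add : ∀ a b g, comp (a + b) g = comp a g + comp b g
  comp_of_mem : ∀ {a : A} {g : G}, a ∈ deg g → comp a g = a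
  comp_of_mem_ne : ∀ {a : A} {g g' : G}, a ∈ deg g → g' ≠ g → comp a g' = 0
  finite_support : ∀ a : A, (Function.support (comp a)).Finite
  sum_comp : ∀ a : A, ∑ᶠ g, comp a g = a

namespace GradedStr

variable {G : Type u} [CommGroup G] {A : Type v} [CommRing A]

/-- `a` is homogeneous: it lies in some graded piece. -/
def IsHomog (𝒜 : GradedStr G A) (a : A) : Prop := ∃ g, a ∈ 𝒜.deg g

/-- A `G`-graded field: a nonzero graded ring in which every nonzero homogeneous
element is invertible. -/
def IsGradedField (𝒜 : GradedStr G A) : Prop :=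
  Nontrivial A ∧ ∀ a : A, 𝒜.IsHomog a → a ≠ 0 → IsUnit a

/-- A graded subring: a subring stable under taking homogeneous components. -/
def IsGradedSubring (𝒜 : GradedStr G A) (S : Subring A) : Prop :=
  ∀ x ∈ S, ∀ g, 𝒜.comp x g ∈ S

/-- A graded subfield of a graded field: a graded subring containing the inverses of
its nonzero homogeneous elements. -/
def IsGradedSubfield (𝒜 : GradedStr G A) (S : Subring A) : Prop :=
  𝒜.IsGradedSubring S ∧ ∀ x ∈ S, 𝒜.IsHomog x → x ≠ 0 → Ring.inverse x ∈ S

/-- The additive subgroup of homogeneous polynomials of grading `h` in `K[g₀⁻¹ T]`,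
the polynomial ring in which `T` is declared homogeneous of grading `g₀`: the
coefficient of `T^n` must be homogeneous of grading `h * g₀⁻ⁿ`. -/
def polyDeg (𝒜 : GradedStr G A) (g₀ h : G) : AddSubgroup (Polynomial A) where
  carrier := {p | ∀ n : ℕ, p.coeff n ∈ 𝒜.deg (h * (g₀ ^ n)⁻¹)}
  zero_mem' := by intro n; simpa using (𝒜.deg (h * (g₀ ^ n)⁻¹)).zero_mem
  add_mem' := by
    intro p q hp hq n
    rw [Polynomial.coeff_add]
    exact (𝒜.deg _).add_mem (hp n) (hq n)
  neg_mem' := by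
    intro p hp n
    rw [Polynomial.coeff_neg]
    exact (𝒜.deg _).neg_mem (hp n)

/-- A homogeneous polynomial in `K[g₀⁻¹T]`. -/
def IsHomogPoly (𝒜 : GradedStr G A) (g₀ : G) (p : Polynomial A) : Prop :=
  ∃ h, p ∈ 𝒜.polyDeg g₀ h

/-- The graded fraction field of a graded subring of a graded field, computed inside
the ambient graded field: the subring generated by `S` together with the inverses of
the nonzero homogeneous elements of `S`. -/
def fracIn (𝒜 : GradedStr G A) (S : Subring A) : Subring A :=
  Subring.closure (↑S ∪ {y : A | ∃ x ∈ S, x ≠ 0 ∧ 𝒜.IsHomog x ∧ y = Ring.inverse x})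

end GradedStr

/-- `x` is integral over the subring `S` (satisfies a monic polynomial equation with
coefficients in `S`). -/
def IntegralOver {A : Type v} [CommRing A] (S : Subring A) (x : A) : Prop :=
  ∃ p : Polynomial A, p.Monic ∧ (∀ n, p.coeff n ∈ S) ∧ Polynomial.eval x p = 0

/-- Algebraic independence of a family of elements over a subring: the evaluation map
from the (multivariate) polynomial ring is injective.  (For homogeneous elements this
is graded algebraic independence, the grading playing no role in injectivity.) -/
def AlgIndepOver {A : Type v} [CommRing A] {ι : Type*} (S : Subring A) (T : ι → A) : Prop :=
  Function.Injective (MvPolynomial.eval₂Hom S.subtype T)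

/-- A graded valuation ring of the graded subfield `F` of the ambient graded field:
a graded subring `O ⊆ F` such that every nonzero homogeneous element `f` of `F`
satisfies `f ∈ O` or `f⁻¹ ∈ O`. -/
def IsGVRofSubfield {G : Type u} [CommGroup G] {A : Type v} [CommRing A]
    (𝒜 : GradedStr G A) (F : Subring A) (O : Subring A) : Prop :=
  O ≤ F ∧ 𝒜.IsGradedSubring O ∧
    ∀ f ∈ F, f ≠ 0 → 𝒜.IsHomog f → f ∈ O ∨ Ring.inverse f ∈ O

open Polynomial

/-!
Let `R i` be the integral closure of `A i` in `K`, and let `R` be their intersection. A graded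
valuation ring of `K` containing some `A i` contains `R`, and the point is that every generator `b`
of `B` is integral over the algebra `l[R]` generated by `l` and `R`. Then finitely many homogeneous
elements `t ⊆ R` already make all of `B` integral over `l[t]`, and `A' = k[t]` works.

By hypothesis `b` lies in every graded valuation ring of `L` containing `l` and `A i`, so it is
integral over each `l[A i]`. Choose a homogeneous transcendence basis `u` of `l` over `k`; clearing
denominators, some `a * b` with `0 ≠ a ∈ k[u]` homogeneous is integral over each `A i [u]`.

Surjectivity of the restriction map gives a graded valuation ring `O ⊇ l` whose restriction to `K`
is minimal among those containing `k`. By minimality the residues of `O ⊓ K` are integral over `k`,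
so a relation between the `u j` over `K`, normalized and reduced modulo the maximal ideal of `O`,
would make them dependent over `k`: the family `u` is algebraically independent over `K`. Hence
`K[u]` is normal with respect to homogeneous elements, and the coefficients of the minimal
polynomial of `a * b` over its graded fraction field are polynomials in `u` integral over every
`A i [u]`; their own coefficients are thus integral over every `A i`, i.e. lie in `R`.
-/

section IntegralOverSubring

variable {R : Type*} [CommRing R] {S T : Subring R} {x : R}

lemma le_closure_union {s : Set R} : S ≤ Subring.closure (S ∪ s) := fun _ hy =>
  Subring.subset_closure (.inl hy)

lemma closure_union_mono_left (h : S ≤ T) (s : Set R) :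
    Subring.closure (S ∪ s) ≤ Subring.closure (T ∪ s) :=
  Subring.closure_mono (Set.union_subset_union_left s h)

lemma isIntegral_of_mem_subring (hx : x ∈ S) : IsIntegral S x :=
  isIntegral_algebraMap (x := (⟨x, hx⟩ : S))

lemma isIntegral_mono_subring (h : S ≤ T) (hx : IsIntegral S x) : IsIntegral T x :=
  hx.map_of_comp_eq (Subring.inclusion h) (RingHom.id R) rfl

lemma isIntegral_trans_subring (hT : ∀ y ∈ T, IsIntegral S y) (hx : IsIntegral T x) :
    IsIntegral S x :=
  isIntegral_trans (A := integralClosure S R) x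
    (hx.map_of_comp_eq (Subring.inclusion (S := T) (T := (integralClosure S R).toSubring) hT)
      (RingHom.id R) rfl)

lemma isIntegral_of_mem_closure {s : Set R} (hs : ∀ y ∈ s, IsIntegral S y)
    (hx : x ∈ Subring.closure s) : IsIntegral S x :=
  (Subring.closure_le (t := (integralClosure S R).toSubring)).mpr hs hx

lemma mem_closure_union_iff_mem_adjoin {s : Set R} :
    x ∈ Subring.closure (S ∪ s) ↔ x ∈ Algebra.adjoin S s := by
  rw [← Subalgebra.mem_toSubring, Algebra.adjoin_eq_ring_closure]
  change _ ↔ x ∈ Subring.closure (Set.range (Subtype.val : S → R) ∪ s)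
  rw [Subtype.range_coe]

lemma mem_closure_union_range_iff {σ : Type*} {u : σ → R} :
    x ∈ Subring.closure (S ∪ Set.range u) ↔ ∃ P : MvPolynomial σ S, MvPolynomial.aeval u P = x := by
  rw [mem_closure_union_iff_mem_adjoin, Algebra.adjoin_range_eq_range_aeval, AlgHom.mem_range]

lemma isIntegral_of_monic_of_coeff_mem {p : R[X]} (hp : p.Monic) (hcoeff : ∀ n, p.coeff n ∈ S)
    (hx : p.eval x = 0) : IsIntegral S x := by
  have hsub : (p.coeffs : Set R) ⊆ S := fun c hc => by
    obtain ⟨n, -, rfl⟩ := mem_coeffs_iff.mp hc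
    exact hcoeff n
  refine ⟨p.toSubring S hsub, (p.monic_toSubring S hsub).mpr hp, ?_⟩
  rw [← eval_map]
  exact (congrArg (eval x) (map_toSubring p S hsub)).trans hx

lemma mem_of_isIntegral_of_mul_eq_one {y : R} (hxy : x * y = 1) (hy : y ∈ S)
    (hx : IsIntegral S x) : x ∈ S := by
  have hlocal : IsLocalHom (algebraMap S (integralClosure S R)) :=
    (algebraMap_isIntegral_iff.mpr inferInstance).isLocalHom
      fun _ _ h => Subtype.ext (congrArg (Subtype.val : integralClosure S R → R) h)
  have hunit : IsUnit (algebraMap S (integralClosure S R) ⟨y, hy⟩) :=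
    IsUnit.of_mul_eq_one_right (⟨x, hx⟩ : integralClosure S R) (Subtype.ext hxy)
  obtain ⟨z, hz⟩ := isUnit_iff_exists_inv.mp (isUnit_of_map_unit _ _ hunit)
  have hyz : y * z = 1 := congrArg Subtype.val hz
  rw [left_inv_eq_right_inv hxy hyz]
  exact z.2

lemma isIntegral_of_mul_mem_of_one_mem {N : Submodule S R} (hN : N.FG) (h1 : 1 ∈ N)
    (hx : ∀ y ∈ N, x * y ∈ N) : IsIntegral S x := by
  have : Module.Finite S N := .of_fg hN
  let φ : Module.End S N := (LinearMap.mulLeft S x).restrict hx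
  obtain ⟨p, hp, hpφ⟩ := LinearMap.exists_monic_and_aeval_eq_zero S φ
  have haeval : ∀ (q : S[X]) (y : N), ((aeval φ q y : N) : R) = aeval x q * y := fun q y => by
    induction q using Polynomial.induction_on' with
    | add q r hq hr => simp only [map_add, LinearMap.add_apply, Submodule.coe_add, hq, hr, add_mul]
    | monomial n a =>
      have hpow : ((φ ^ n) y : R) = x ^ n * y := by
        rw [show φ ^ n = _ from Module.End.pow_restrict n hx, LinearMap.coe_restrict_apply,
          LinearMap.pow_mulLeft, LinearMap.mulLeft_apply]
      simp only [aeval_monomial, Module.End.mul_apply, Module.algebraMap_end_apply,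
        Submodule.coe_smul, hpow, Algebra.smul_def, mul_assoc]
  have hpx : aeval x p = 0 := by
    simpa only [hpφ, LinearMap.zero_apply, Submodule.coe_zero, mul_one] using
      (haeval p ⟨1, h1⟩).symm
  exact ⟨p, hp, hpx⟩

lemma aeval_mul_mem_span {f g : R} (hfg : f * g = 1) (p : S[X]) {N : Submodule S R} {m : ℕ}
    (hf : ∀ i ≤ p.natDegree, f ^ i ∈ N) (hg : ∀ j ≤ m, g ^ j ∈ N) {j : ℕ} (hj : j ≤ m) :
    aeval f p * g ^ j ∈ N := by
  rw [aeval_eq_sum_range, Finset.sum_mul]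
  refine sum_mem fun i hi => ?_
  rw [smul_mul_assoc]
  refine N.smul_mem _ ?_
  have hpow : ∀ n, f ^ n * g ^ n = 1 := fun n => by rw [← mul_pow, hfg, one_pow]
  rcases le_total j i with h | h
  · obtain ⟨d, rfl⟩ := exists_add_of_le h
    rw [pow_add, mul_right_comm, hpow, one_mul]
    exact hf d (by grind)
  · obtain ⟨d, rfl⟩ := exists_add_of_le h
    rw [pow_add, ← mul_assoc, hpow, one_mul]
    exact hg d (by lia)

-- With `x = p(f) = q(g)`, multiplication by `x` preserves the span of the powers of `f` up to
-- `deg p` and of `g` up to `deg q`.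
lemma isIntegral_of_mem_adjoin_of_mem_adjoin {f g : R} (hfg : f * g = 1)
    (hf : x ∈ Algebra.adjoin S {f}) (hg : x ∈ Algebra.adjoin S {g}) : IsIntegral S x := by
  rw [Algebra.adjoin_singleton_eq_range_aeval] at hf hg
  obtain ⟨p, rfl⟩ := hf
  obtain ⟨q, hq⟩ := hg
  let s : Set R := (f ^ ·) '' Set.Iic p.natDegree ∪ (g ^ ·) '' Set.Iic q.natDegree
  have hfs : ∀ i ≤ p.natDegree, f ^ i ∈ Submodule.span S s := fun i hi =>
    Submodule.subset_span (.inl ⟨i, hi, rfl⟩)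
  have hgs : ∀ j ≤ q.natDegree, g ^ j ∈ Submodule.span S s := fun j hj =>
    Submodule.subset_span (.inr ⟨j, hj, rfl⟩)
  have hs : s.Finite := ((Set.finite_Iic _).image _).union ((Set.finite_Iic _).image _)
  refine isIntegral_of_mul_mem_of_one_mem (Submodule.fg_span hs)
    (by simpa using hfs 0 (Nat.zero_le _)) fun y hy => ?_
  have hmap : Submodule.span S s ≤
      (Submodule.span S s).comap (LinearMap.mulLeft S (aeval f p)) := by
    refine Submodule.span_le.mpr ?_
    rintro _ (⟨i, hi, rfl⟩ | ⟨j, hj, rfl⟩)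
    · change aeval f p * f ^ i ∈ Submodule.span S s
      exact hq ▸ aeval_mul_mem_span (mul_comm f g ▸ hfg) q hgs hfs hi
    · exact aeval_mul_mem_span hfg p hfs hgs hj
  exact hmap hy

lemma exists_finset_mem_closure_union (S : Set R) {s : Set R} (hx : x ∈ Subring.closure (S ∪ s)) :
    ∃ t : Finset R, ↑t ⊆ s ∧ x ∈ Subring.closure (S ∪ t) := by
  classical
  induction hx using Subring.closure_induction with
  | mem y hy =>
    rcases hy with hy | hy
    · exact ⟨∅, by simp, Subring.subset_closure (.inl hy)⟩
    · exact ⟨{y}, by simpa using hy, Subring.subset_closure (.inr (by simp))⟩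
  | zero => exact ⟨∅, by simp, zero_mem _⟩
  | one => exact ⟨∅, by simp, OneMemClass.one_mem _⟩
  | neg y _ hy =>
    obtain ⟨t, ht, hyt⟩ := hy
    exact ⟨t, ht, neg_mem hyt⟩
  | add y z _ _ hy hz =>
    obtain ⟨t, ht, hyt⟩ := hy
    obtain ⟨t', ht', hzt⟩ := hz
    refine ⟨t ∪ t', by simp [ht, ht'], add_mem (Subring.closure_mono ?_ hyt)
      (Subring.closure_mono ?_ hzt)⟩ <;> grind
  | mul y z _ _ hy hz =>
    obtain ⟨t, ht, hyt⟩ := hy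
    obtain ⟨t', ht', hzt⟩ := hz
    refine ⟨t ∪ t', by simp [ht, ht'], MulMemClass.mul_mem (Subring.closure_mono ?_ hyt)
      (Subring.closure_mono ?_ hzt)⟩ <;> grind

lemma exists_finset_isIntegral_closure_union (S : Set R) {s : Set R}
    (hx : IsIntegral (Subring.closure (S ∪ s)) x) :
    ∃ t : Finset R, ↑t ⊆ s ∧ IsIntegral (Subring.closure (S ∪ t)) x := by
  classical
  obtain ⟨p, hp, hpx⟩ := hx
  choose t hts ht using fun n => exists_finset_mem_closure_union S (p.coeff n).2
  refine ⟨p.support.biUnion t, by simpa using fun n _ => hts n, ?_⟩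
  refine isIntegral_of_monic_of_coeff_mem (hp.map (Subring.closure (S ∪ s)).subtype)
    (fun n => ?_) (by rwa [eval_map])
  rw [coeff_map]
  by_cases hn : p.coeff n = 0
  · rw [hn, map_zero]
    exact zero_mem _
  · refine Subring.closure_mono (Set.union_subset_union_right S fun y hy => ?_) (ht n)
    exact Finset.mem_biUnion.mpr ⟨n, mem_support_iff.mpr hn, hy⟩

section Denominators

variable {M : Submonoid R} {s : Set R}

lemma exists_mul_mem_of_mem_closure_union (hM : ∀ a ∈ M, a ∈ S)
    (hs : ∀ y ∈ s, ∃ a ∈ M, a * y ∈ S) (hx : x ∈ Subring.closure (S ∪ s)) :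
    ∃ a ∈ M, a * x ∈ S := by
  induction hx using Subring.closure_induction with
  | mem x hx => exact hx.elim (fun hx => ⟨1, one_mem M, by rwa [one_mul]⟩) (hs x)
  | zero => exact ⟨1, one_mem M, by simp only [mul_zero, zero_mem]⟩
  | one => exact ⟨1, one_mem M, by simp only [mul_one, one_mem]⟩
  | neg x _ hx =>
    obtain ⟨a, ha, hax⟩ := hx
    exact ⟨a, ha, by simpa only [mul_neg] using neg_mem hax⟩
  | add x y _ _ hx hy =>
    obtain ⟨a, ha, hax⟩ := hx
    obtain ⟨b, hb, hby⟩ := hy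
    refine ⟨a * b, mul_mem ha hb, ?_⟩
    rw [show a * b * (x + y) = b * (a * x) + a * (b * y) by ring]
    exact add_mem (mul_mem (hM b hb) hax) (mul_mem (hM a ha) hby)
  | mul x y _ _ hx hy =>
    obtain ⟨a, ha, hax⟩ := hx
    obtain ⟨b, hb, hby⟩ := hy
    exact ⟨a * b, mul_mem ha hb, mul_mul_mul_comm a b x y ▸ mul_mem hax hby⟩

lemma exists_forall_of_forall_exists {ι : Type*} [Finite ι] {P : ι → R → Prop}
    (hP : ∀ i, ∀ a ∈ M, ∀ b, P i b → P i (a * b)) (h : ∀ i, ∃ a ∈ M, P i a) :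
    ∃ a ∈ M, ∀ i, P i a := by
  classical
  have := Fintype.ofFinite ι
  choose a ha hPa using h
  refine ⟨∏ i, a i, prod_mem fun i _ => ha i, fun i => ?_⟩
  rw [← Finset.prod_erase_mul _ _ (Finset.mem_univ i)]
  exact hP i _ (prod_mem fun j _ => ha j) _ (hPa i)

lemma exists_isIntegral_mul_of_isIntegral_closure_union (hM : ∀ a ∈ M, a ∈ S)
    (hs : ∀ y ∈ s, ∃ a ∈ M, a * y ∈ S) (hx : IsIntegral (Subring.closure (S ∪ s)) x) :
    ∃ a ∈ M, IsIntegral S (a * x) := by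
  obtain ⟨p, hp, hpx⟩ := hx
  let q : R[X] := p.map (Subring.closure (S ∪ s)).subtype
  have hq : q.Monic := hp.map _
  obtain ⟨a, ha, hap⟩ : ∃ a ∈ M, ∀ n : Fin q.natDegree, a * q.coeff n ∈ S :=
    exists_forall_of_forall_exists
      (fun n a ha b hb => mul_assoc a b _ ▸ mul_mem (hM a ha) hb)
      fun n => exists_mul_mem_of_mem_closure_union hM hs (by simp [q])
  refine ⟨a, ha, isIntegral_of_monic_of_coeff_mem ((monic_scaleRoots_iff a).mpr hq) (fun n => ?_)
    (scaleRoots_eval₂_eq_zero (RingHom.id R) ((eval_map _ _).trans hpx))⟩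
  rw [coeff_scaleRoots]
  rcases lt_trichotomy n q.natDegree with hn | rfl | hn
  · obtain ⟨m, hm⟩ := Nat.exists_eq_add_one.mpr (Nat.sub_pos_of_lt hn)
    rw [hm, pow_succ', ← mul_assoc, mul_comm _ a]
    exact mul_mem (hap ⟨n, hn⟩) (pow_mem (hM a ha) m)
  · rw [hq.coeff_natDegree, one_mul]
    exact pow_mem (hM a ha) _
  · rw [coeff_eq_zero_of_natDegree_lt hn, zero_mul]
    exact zero_mem S

end Denominators

end IntegralOverSubring

section MonomialOrder

open scoped nonZeroDivisors

variable {σ R A : Type*} [CommRing R] [CommRing A]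

lemma nonempty_monomialOrder (σ : Type u) : Nonempty (MonomialOrder.{u, u} σ) := by
  classical
  let : LinearOrder σ := linearOrderOfSTO (Function.swap WellOrderingRel)
  have : WellFoundedGT σ := ⟨WellOrderingRel.isWellOrder.wf⟩
  exact ⟨MonomialOrder.lex⟩

attribute [local instance] MvPolynomial.algebraMvPolynomial in
lemma not_algebraicIndependent_of_isIntegral_coeff [Algebra R A] [Nontrivial A]
    (m : MonomialOrder σ) {u : σ → A} {P : MvPolynomial σ A} (hlead : m.leadingCoeff P ∈ A⁰)
    (hint : ∀ n, IsIntegral R (P.coeff n)) (hPu : MvPolynomial.aeval u P = 0) :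
    ¬AlgebraicIndependent R u := by
  have : Nontrivial R := (algebraMap R A).domain_nontrivial
  have halg : IsAlgebraic (MvPolynomial σ R) P :=
    (MvPolynomial.isIntegral_iff_isIntegral_coeff.mpr hint).isAlgebraic
  obtain ⟨T, -, r, hr0, hr⟩ := halg.exists_nonzero_eq_adjoin_mul
    (m.mem_nonZeroDivisors_of_leadingCoeff_mem_nonZeroDivisors hlead)
  have hru : MvPolynomial.aeval u r = 0 := by
    rw [← MvPolynomial.aeval_map_algebraMap A, ← MvPolynomial.algebraMap_def, ← hr, map_mul, hPu,
      zero_mul]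
  exact fun h => hr0 (algebraicIndependent_iff.mp h r hru)

lemma degree_le_of_forall_exists_pow_mul_eq (m : MonomialOrder σ)
    {P Q : MvPolynomial σ R} (hP : m.leadingCoeff P ∈ R⁰) (hQ : IsUnit (m.leadingCoeff Q))
    (h : ∀ n, ∃ W, P ^ n * W = Q ^ (n + 1)) : m.degree P ≤ m.degree Q := by
  rcases subsingleton_or_nontrivial R with _ | _
  · rw [m.degree_subsingleton, m.degree_subsingleton]
  have hdeg : ∀ n, n • m.degree P ≤ (n + 1) • m.degree Q := fun n => by
    obtain ⟨W, hW⟩ := h n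
    have hQn : m.leadingCoeff Q ^ (n + 1) ≠ 0 := (hQ.pow _).ne_zero
    have hW0 : W ≠ 0 := fun h0 => hQn <| by
      rw [← m.leadingCoeff_pow_of_pow_leadingCoeff_ne_zero hQn, ← hW, h0, mul_zero,
        m.leadingCoeff_zero]
    have hPn : m.leadingCoeff P ^ n ∈ R⁰ := pow_mem hP n
    have hPn0 : m.leadingCoeff P ^ n ≠ 0 := nonZeroDivisors.ne_zero hPn
    rw [← m.degree_pow_of_pow_leadingCoeff_ne_zero hQn, ← hW,
      m.degree_mul_of_left_mem_nonZeroDivisors _ hW0,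
      m.degree_pow_of_pow_leadingCoeff_ne_zero hPn0]
    · exact le_self_add
    · rwa [m.leadingCoeff_pow_of_pow_leadingCoeff_ne_zero hPn0]
  intro i
  have hi := hdeg (m.degree Q i + 1) i
  simp only [Finsupp.smul_apply, smul_eq_mul] at hi
  nlinarith

end MonomialOrder

section AlgebraicallyIndependentExtension

variable {R : Type*} [CommRing R] {σ : Type*} {u : σ → R}

lemma isIntegralElem_of_isIntegral_range {A B : Type*} [CommRing A] [CommRing B] {f : A →+* B}
    {x : B} (hx : IsIntegral f.range x) : f.IsIntegralElem x := by
  obtain ⟨p, hp, hpx⟩ := hx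
  obtain ⟨q, rfl, -, hq⟩ := lifts_and_natDegree_eq_and_monic
    (map_surjective _ f.rangeRestrict_surjective p) hp
  exact ⟨q, hq, by rwa [eval₂_map] at hpx⟩

attribute [local instance] MvPolynomial.algebraMvPolynomial in
lemma isIntegral_coeff_of_isIntegral_aeval {S T : Subring R} (hST : S ≤ T)
    (hind : AlgebraicIndependent T u) {P : MvPolynomial σ T}
    (hP : IsIntegral (Subring.closure (S ∪ Set.range u)) (MvPolynomial.aeval u P)) (m : σ →₀ ℕ) :
    IsIntegral S ((P.coeff m : T) : R) := by
  let : Algebra S T := (Subring.inclusion hST).toAlgebra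
  have := IsScalarTower.of_algebraMap_eq' (R := S) (S := T) (A := R) rfl
  let f : MvPolynomial σ T →+* R := (MvPolynomial.aeval u : MvPolynomial σ T →ₐ[T] R)
  let g : MvPolynomial σ S →+* MvPolynomial σ T := algebraMap _ _
  have hrange : Subring.closure (S ∪ Set.range u) ≤ (f.comp g).range := fun x hx => by
    obtain ⟨Q, rfl⟩ := mem_closure_union_range_iff.mp hx
    exact ⟨Q, MvPolynomial.aeval_map_algebraMap T u Q⟩
  obtain ⟨q, hq, hqP⟩ := isIntegralElem_of_isIntegral_range (isIntegral_mono_subring hrange hP)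
  have hPint : IsIntegral (MvPolynomial σ S) P :=
    ⟨q, hq, hind ((hom_eval₂ q g f P).trans (hqP.trans (map_zero f).symm))⟩
  exact (MvPolynomial.isIntegral_iff_isIntegral_coeff.mp hPint m).algebraMap

end AlgebraicallyIndependentExtension

section TranscendenceBasis

variable {R : Type*} [CommRing R] {k : Subring R} {s t : Set R} {x : R}

lemma isAlgebraic_closure_union_of_maximal [Nontrivial R]
    (hs : Maximal (fun s => AlgebraicIndepOn k id s ∧ s ⊆ t) s) (hx : x ∈ t) :
    IsAlgebraic (Subring.closure (k ∪ s)) x := by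
  have halg : IsAlgebraic (Algebra.adjoin k (id '' s)) x := by
    by_contra htrans
    refine htrans (isAlgebraic_algebraMap (⟨x, Algebra.subset_adjoin ?_⟩ : Algebra.adjoin k _))
    rw [Set.image_id]
    exact hs.2 ⟨hs.prop.1.insert htrans, Set.insert_subset hx hs.prop.2⟩
      (Set.subset_insert x s) (Set.mem_insert x s)
  have hle : (Algebra.adjoin k (id '' s)).toSubring ≤ Subring.closure (k ∪ s) := fun y hy =>
    mem_closure_union_iff_mem_adjoin.mpr (by simpa using hy)
  exact halg.ringHom_of_comp_eq (Subring.inclusion hle) (RingHom.id R)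
    (Subring.inclusion_injective hle) rfl

end TranscendenceBasis

namespace GradedStr

variable {G : Type u} [CommGroup G] {L : Type v} [CommRing L] {𝒜 : GradedStr G L}

section Components

variable (𝒜)

/-- The homogeneous component of grading `g` as an additive homomorphism. -/
def compHom (g : G) : L →+ L where
  toFun x := 𝒜.comp x g
  map_zero' := 𝒜.comp_of_mem (𝒜.deg g).zero_mem
  map_add' x y := 𝒜.comp_add x y g

lemma comp_zero (g : G) : 𝒜.comp 0 g = 0 := map_zero (𝒜.compHom g)

lemma comp_neg (x : L) (g : G) : 𝒜.comp (-x) g = -𝒜.comp x g := map_neg (𝒜.compHom g) x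

lemma comp_finsetSum {ι : Type*} (s : Finset ι) (f : ι → L) (g : G) :
    𝒜.comp (∑ i ∈ s, f i) g = ∑ i ∈ s, 𝒜.comp (f i) g := map_sum (𝒜.compHom g) f s

lemma sum_comp_support (x : L) : ∑ g ∈ (𝒜.finite_support x).toFinset, 𝒜.comp x g = x := by
  rw [← finsum_eq_sum _ (𝒜.finite_support x), 𝒜.sum_comp]

lemma exists_comp_ne_zero {x : L} (hx : x ≠ 0) : ∃ g, 𝒜.comp x g ≠ 0 := by
  contrapose! hx
  rw [← 𝒜.sum_comp_support x]
  exact Finset.sum_eq_zero fun g _ => hx g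

lemma comp_mul_of_mem {x : L} {g : G} (hx : x ∈ 𝒜.deg g) (y : L) (h : G) :
    𝒜.comp (x * y) h = x * 𝒜.comp y (g⁻¹ * h) := by
  conv_lhs => rw [← 𝒜.sum_comp_support y, Finset.mul_sum, comp_finsetSum]
  rw [Finset.sum_eq_single (g⁻¹ * h)]
  · exact 𝒜.comp_of_mem (by simpa using 𝒜.mul_mem hx (𝒜.comp_mem y (g⁻¹ * h)))
  · intro b _ hb
    exact 𝒜.comp_of_mem_ne (𝒜.mul_mem hx (𝒜.comp_mem y b)) fun e => hb (by simp [e])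
  · intro hh
    have hzero : 𝒜.comp y (g⁻¹ * h) = 0 := by simpa using hh
    rw [hzero, mul_zero, comp_zero]

lemma comp_mul_of_mem_right {y : L} {d : G} (hy : y ∈ 𝒜.deg d) (x : L) (g : G) :
    𝒜.comp (x * y) g = 𝒜.comp x (g * d⁻¹) * y := by
  rw [mul_comm x, 𝒜.comp_mul_of_mem hy, mul_comm y, mul_comm g]

lemma pow_mem_deg {x : L} {g : G} (hx : x ∈ 𝒜.deg g) (n : ℕ) : x ^ n ∈ 𝒜.deg (g ^ n) := by
  induction n with
  | zero => simpa only [pow_zero] using 𝒜.one_mem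
  | succ n ih => simpa only [pow_succ] using 𝒜.mul_mem ih hx

lemma prod_mem_deg {ι : Type*} (s : Finset ι) {x : ι → L} {g : ι → G}
    (hx : ∀ i ∈ s, x i ∈ 𝒜.deg (g i)) : ∏ i ∈ s, x i ∈ 𝒜.deg (∏ i ∈ s, g i) := by
  classical
  induction s using Finset.induction_on with
  | empty => simpa only [Finset.prod_empty] using 𝒜.one_mem
  | insert i s hi ih =>
    simp only [Finset.prod_insert hi]
    exact 𝒜.mul_mem (hx i (by simp)) (ih fun j hj => hx j (by simp [hj]))

variable {𝒜}

lemma isHomog_comp (x : L) (g : G) : 𝒜.IsHomog (𝒜.comp x g) := ⟨g, 𝒜.comp_mem x g⟩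

lemma isHomog_one : 𝒜.IsHomog 1 := ⟨1, 𝒜.one_mem⟩

lemma IsHomog.mul {x y : L} (hx : 𝒜.IsHomog x) (hy : 𝒜.IsHomog y) : 𝒜.IsHomog (x * y) := by
  obtain ⟨g, hg⟩ := hx
  obtain ⟨h, hh⟩ := hy
  exact ⟨_, 𝒜.mul_mem hg hh⟩

lemma IsHomog.comp_eq_or {x : L} (hx : 𝒜.IsHomog x) (g : G) :
    𝒜.comp x g = x ∨ 𝒜.comp x g = 0 := by
  obtain ⟨h, hh⟩ := hx
  rcases eq_or_ne g h with rfl | hne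
  · exact .inl (𝒜.comp_of_mem hh)
  · exact .inr (𝒜.comp_of_mem_ne hh hne)

lemma IsHomog.comp_mem {S : Type*} [SetLike S L] [ZeroMemClass S L] {s : S} {x : L}
    (hx : 𝒜.IsHomog x) (hxs : x ∈ s) (g : G) : 𝒜.comp x g ∈ s := by
  rcases hx.comp_eq_or g with h | h <;> rw [h]
  · exact hxs
  · exact zero_mem s

lemma IsGradedSubring.le_of_homog {S T : Subring L} (hS : 𝒜.IsGradedSubring S)
    (h : ∀ x ∈ S, 𝒜.IsHomog x → x ∈ T) : S ≤ T := by
  intro x hx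
  rw [← 𝒜.sum_comp_support x]
  exact sum_mem fun g _ => h _ (hS x hx g) (isHomog_comp x g)

lemma IsGradedSubring.inf {S T : Subring L} (hS : 𝒜.IsGradedSubring S)
    (hT : 𝒜.IsGradedSubring T) : 𝒜.IsGradedSubring (S ⊓ T) :=
  fun x hx g => ⟨hS x hx.1 g, hT x hx.2 g⟩

lemma isGradedSubring_closure {s : Set L} (hs : ∀ x ∈ s, ∀ g, 𝒜.comp x g ∈ Subring.closure s) :
    𝒜.IsGradedSubring (Subring.closure s) := by
  intro x hx
  induction hx using Subring.closure_induction with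
  | mem x hx => exact hs x hx
  | zero => exact fun g => (𝒜.comp_zero g).symm ▸ zero_mem _
  | one => exact isHomog_one.comp_mem (OneMemClass.one_mem _)
  | add x y _ _ hx hy => exact fun g => (𝒜.comp_add x y g).symm ▸ add_mem (hx g) (hy g)
  | neg x _ hx => exact fun g => (𝒜.comp_neg x g).symm ▸ neg_mem (hx g)
  | mul x y _ _ hx hy =>
    intro g
    rw [← 𝒜.sum_comp_support x, Finset.sum_mul, comp_finsetSum]
    refine sum_mem fun h _ => ?_
    rw [𝒜.comp_mul_of_mem (𝒜.comp_mem x h)]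
    exact MulMemClass.mul_mem (hx _) (hy _)

lemma IsGradedSubring.closure_union {S : Subring L} (hS : 𝒜.IsGradedSubring S) {s : Set L}
    (hs : ∀ x ∈ s, 𝒜.IsHomog x) : 𝒜.IsGradedSubring (Subring.closure (S ∪ s)) := by
  refine isGradedSubring_closure ?_
  rintro x (hx | hx) g
  · exact Subring.subset_closure (.inl (hS x hx g))
  · exact (hs x hx).comp_mem (Subring.subset_closure (.inr hx)) g

lemma IsGradedSubring.closure_union_subring {S T : Subring L} (hS : 𝒜.IsGradedSubring S)
    (hT : 𝒜.IsGradedSubring T) :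
    𝒜.IsGradedSubring (Subring.closure ((S : Set L) ∪ T)) := by
  refine isGradedSubring_closure ?_
  rintro x (hx | hx) g
  · exact Subring.subset_closure (.inl (hS x hx g))
  · exact Subring.subset_closure (.inr (hT x hx g))

end Components

section GradedField

variable {x y : L}

lemma isGradedSubfield_top : 𝒜.IsGradedSubfield ⊤ :=
  ⟨fun _ _ _ => trivial, fun _ _ _ _ => trivial⟩

lemma IsGradedField.mul_inverse (hL : 𝒜.IsGradedField) (hx : 𝒜.IsHomog x) (h0 : x ≠ 0) :
    x * Ring.inverse x = 1 := Ring.mul_inverse_cancel x (hL.2 x hx h0)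

lemma IsGradedField.inverse_mul (hL : 𝒜.IsGradedField) (hx : 𝒜.IsHomog x) (h0 : x ≠ 0) :
    Ring.inverse x * x = 1 := Ring.inverse_mul_cancel x (hL.2 x hx h0)

lemma IsGradedField.isHomog_inverse (hL : 𝒜.IsGradedField) (hx : 𝒜.IsHomog x) :
    𝒜.IsHomog (Ring.inverse x) := by
  rcases eq_or_ne x 0 with rfl | h0
  · exact (Ring.inverse_zero L).symm ▸ hx
  obtain ⟨g, hg⟩ := id hx
  refine ⟨g⁻¹, ?_⟩
  have hcomp : x * 𝒜.comp (Ring.inverse x) g⁻¹ = x * Ring.inverse x := by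
    have h := 𝒜.comp_mul_of_mem hg (Ring.inverse x) 1
    rwa [hL.mul_inverse hx h0, 𝒜.comp_of_mem 𝒜.one_mem, mul_one, eq_comm,
      ← hL.mul_inverse hx h0] at h
  rw [← (hL.2 x hx h0).mul_left_cancel hcomp]
  exact 𝒜.comp_mem _ _

lemma IsGradedField.mul_ne_zero (hL : 𝒜.IsGradedField) (hx : 𝒜.IsHomog x) (h0 : x ≠ 0)
    (hy : y ≠ 0) : x * y ≠ 0 :=
  (hL.2 x hx h0).mul_right_eq_zero.not.mpr hy

end GradedField

section ValuationRings

variable {F D O : Subring L} {x : L}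

lemma _root_.IsGVRofSubfield.mem_of_isIntegral (hL : 𝒜.IsGradedField)
    (hO : IsGVRofSubfield 𝒜 F O) (hxF : x ∈ F) (hx : 𝒜.IsHomog x) (hint : IsIntegral O x) :
    x ∈ O := by
  rcases eq_or_ne x 0 with rfl | h0
  · exact zero_mem O
  · exact (hO.2.2 x hxF h0 hx).elim id fun h =>
      mem_of_isIntegral_of_mul_eq_one (hL.mul_inverse hx h0) h hint

lemma isGVRofSubfield_of_maximal_notMem (hL : 𝒜.IsGradedField) (hF : 𝒜.IsGradedSubfield F)
    (hO : Maximal (fun S => 𝒜.IsGradedSubring S ∧ S ≤ F ∧ x ∉ S) O)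
    (hx : 𝒜.IsHomog x) (h0 : x ≠ 0) (hxO : Ring.inverse x ∈ O) : IsGVRofSubfield 𝒜 F O := by
  obtain ⟨⟨hgr, hOF, hxmem⟩, hmax⟩ := hO
  refine ⟨hOF, hgr, fun f hf hf0 hfh => ?_⟩
  have hadjoin : ∀ t ∈ F, 𝒜.IsHomog t → t ∉ O → x ∈ Subring.closure (O ∪ {t}) := by
    intro t ht hth htO
    by_contra hxt
    refine htO (hmax ⟨hgr.closure_union (by simpa using hth), ?_, hxt⟩
      le_closure_union (Subring.subset_closure (.inr rfl)))
    exact Subring.closure_le.mpr (Set.union_subset hOF (by simpa using ht))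
  by_contra! hnot
  have hint := isIntegral_of_mem_adjoin_of_mem_adjoin (hL.mul_inverse hfh hf0)
    (mem_closure_union_iff_mem_adjoin.mp (hadjoin f hf hfh hnot.1))
    (mem_closure_union_iff_mem_adjoin.mp
      (hadjoin _ (hF.2 f hf hfh hf0) (hL.isHomog_inverse hfh) hnot.2))
  exact hxmem (mem_of_isIntegral_of_mul_eq_one (hL.mul_inverse hx h0) hxO hint)

lemma exists_isGVRofSubfield_notMem (hL : 𝒜.IsGradedField) (hF : 𝒜.IsGradedSubfield F)
    (hD : 𝒜.IsGradedSubring D) (hDF : D ≤ F) (hxF : x ∈ F) (hx : 𝒜.IsHomog x)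
    (hint : ¬IsIntegral D x) : ∃ O, IsGVRofSubfield 𝒜 F O ∧ D ≤ O ∧ x ∉ O := by
  have h0 : x ≠ 0 := fun h => hint (h ▸ isIntegral_zero)
  let D' := Subring.closure (D ∪ {Ring.inverse x})
  have hxD' : x ∉ D' := fun h => hint <|
    isIntegral_of_mem_adjoin_of_mem_adjoin (hL.mul_inverse hx h0)
      (Algebra.self_mem_adjoin_singleton D x) (mem_closure_union_iff_mem_adjoin.mp h)
  have hD'F : D' ≤ F := Subring.closure_le.mpr
    (Set.union_subset hDF (by simpa using hF.2 x hxF hx h0))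
  have hD' : 𝒜.IsGradedSubring D' := hD.closure_union (by simpa using hL.isHomog_inverse hx)
  have hchain : ∀ c ⊆ {S | 𝒜.IsGradedSubring S ∧ S ≤ F ∧ x ∉ S}, IsChain (· ≤ ·) c → ∀ S ∈ c,
      ∃ T ∈ {S | 𝒜.IsGradedSubring S ∧ S ≤ F ∧ x ∉ S}, ∀ S ∈ c, S ≤ T := by
    intro c hc hchain S hS
    have hmem : ∀ {y}, y ∈ sSup c ↔ ∃ T ∈ c, y ∈ T := fun {y} =>
      Subring.mem_sSup_of_directedOn ⟨S, hS⟩ hchain.directedOn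
    refine ⟨sSup c, ⟨fun y hy g => ?_, sSup_le fun T hT => (hc hT).2.1, fun hxc => ?_⟩,
      fun T hT => le_sSup hT⟩
    · obtain ⟨T, hT, hyT⟩ := hmem.mp hy
      exact hmem.mpr ⟨T, hT, (hc hT).1 y hyT g⟩
    · obtain ⟨T, hT, hxT⟩ := hmem.mp hxc
      exact (hc hT).2.2 hxT
  obtain ⟨O, hD'O, hO⟩ := zorn_le_nonempty₀ _ hchain D' ⟨hD', hD'F, hxD'⟩
  refine ⟨O, isGVRofSubfield_of_maximal_notMem hL hF hO hx h0
    (hD'O (Subring.subset_closure (.inr rfl))), ?_, hO.prop.2.2⟩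
  exact le_closure_union.trans hD'O

lemma isIntegral_of_forall_mem_isGVRofSubfield (hL : 𝒜.IsGradedField)
    (hF : 𝒜.IsGradedSubfield F) (hD : 𝒜.IsGradedSubring D) (hDF : D ≤ F) (hxF : x ∈ F)
    (hx : 𝒜.IsHomog x) (h : ∀ O, IsGVRofSubfield 𝒜 F O → D ≤ O → x ∈ O) : IsIntegral D x := by
  by_contra hint
  obtain ⟨O, hO, hDO, hxO⟩ := exists_isGVRofSubfield_notMem hL hF hD hDF hxF hx hint
  exact hxO (h O hO hDO)

end ValuationRings

section MinimalValuationRings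

variable {k K O : Subring L}

lemma isGVRofSubfield_inf_sInf {c : Set (Subring L)} (hK : 𝒜.IsGradedSubfield K)
    (hc : ∀ O ∈ c, IsGVRofSubfield 𝒜 K O) (hchain : IsChain (· ≤ ·) c) :
    IsGVRofSubfield 𝒜 K (K ⊓ sInf c) := by
  refine ⟨inf_le_left, hK.1.inf fun x hx g => Subring.mem_sInf.mpr fun O hO =>
    (hc O hO).2.1 x (Subring.mem_sInf.mp hx O hO) g, fun f hf hf0 hfh => ?_⟩
  by_cases hall : ∀ O ∈ c, f ∈ O
  · exact .inl ⟨hf, Subring.mem_sInf.mpr hall⟩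
  push Not at hall
  obtain ⟨O, hO, hfO⟩ := hall
  refine .inr ⟨hK.2 f hf hfh hf0, Subring.mem_sInf.mpr fun O' hO' => ?_⟩
  rcases hchain.total hO hO' with hle | hle
  · exact hle (((hc O hO).2.2 f hf hf0 hfh).resolve_left hfO)
  · exact ((hc O' hO').2.2 f hf hf0 hfh).resolve_left fun h => hfO (hle h)

lemma exists_minimal_isGVRofSubfield (hK : 𝒜.IsGradedSubfield K) (hkK : k ≤ K) :
    ∃ O, Minimal (fun O => IsGVRofSubfield 𝒜 K O ∧ k ≤ O) O :=
  zorn_le₀ (α := (Subring L)ᵒᵈ) {O | IsGVRofSubfield 𝒜 K O ∧ k ≤ O} fun c hc hchain =>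
    ⟨OrderDual.toDual (K ⊓ sInf (α := Subring L) c),
      ⟨isGVRofSubfield_inf_sInf hK (fun _ hO => (hc hO).1) hchain.symm,
        le_inf hkK (le_sInf fun _ hO => (hc hO).2)⟩,
      fun O hO => (inf_le_right.trans (sInf_le hO) : K ⊓ sInf (α := Subring L) c ≤ O)⟩

end MinimalValuationRings

section MaximalIdeal

variable {k K l O : Subring L}

/-- The elements of grading `g` in the graded maximal ideal of a graded valuation ring `O`. -/
def nonunitsOfDeg (hL : 𝒜.IsGradedField) (hO : IsGVRofSubfield 𝒜 ⊤ O) (g : G) :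
    AddSubmonoid L where
  carrier := {x | x ∈ 𝒜.deg g ∧ ∀ y ∈ O, x * y ≠ 1}
  zero_mem' := ⟨(𝒜.deg g).zero_mem, fun y _ => by
    have := hL.1
    simp only [zero_mul, ne_eq, zero_ne_one, not_false_eq_true]⟩
  add_mem' := by
    rintro a b ⟨ha, haO⟩ ⟨hb, hbO⟩
    refine ⟨add_mem ha hb, fun y hy hyab => ?_⟩
    rcases eq_or_ne a 0 with rfl | ha0
    · exact hbO y hy (by rwa [zero_add] at hyab)
    rcases eq_or_ne b 0 with rfl | hb0
    · exact haO y hy (by rwa [add_zero] at hyab)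
    have hb' := hL.inverse_mul ⟨g, hb⟩ hb0
    have hf : 𝒜.IsHomog (a * Ring.inverse b) := .mul ⟨g, ha⟩ (hL.isHomog_inverse ⟨g, hb⟩)
    have hf0 : a * Ring.inverse b ≠ 0 := fun h => ha0 (by
      rw [← mul_one a, ← hb', ← mul_assoc, h, zero_mul])
    rcases hO.2.2 _ trivial hf0 hf with h | h
    · refine hbO ((a * Ring.inverse b + 1) * y)
        (MulMemClass.mul_mem (add_mem h (OneMemClass.one_mem O)) hy) ?_
      linear_combination hyab + a * y * hb'
    · refine haO ((Ring.inverse (a * Ring.inverse b) + 1) * y)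
        (MulMemClass.mul_mem (add_mem h (OneMemClass.one_mem O)) hy) ?_
      linear_combination hyab + y * b * hL.mul_inverse hf hf0 -
        y * a * Ring.inverse (a * Ring.inverse b) * hb'

variable {hL : 𝒜.IsGradedField} {hO : IsGVRofSubfield 𝒜 ⊤ O}

lemma mul_mem_nonunitsOfDeg {x y : L} {g h : G} (hx : x ∈ O) (hxg : x ∈ 𝒜.deg g)
    (hy : y ∈ nonunitsOfDeg hL hO h) : x * y ∈ nonunitsOfDeg hL hO (g * h) :=
  ⟨𝒜.mul_mem hxg hy.1, fun z hz hxyz =>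
    hy.2 (x * z) (MulMemClass.mul_mem hx hz) (by rw [← hxyz]; ring)⟩

variable (hL hO) in
/-- The maximal graded ideal of a graded valuation ring `O` of the ambient graded field: all
homogeneous components are nonunits of `O`. It need not be a maximal, or even a prime, ideal. -/
def gradedMaximalIdeal : Ideal O where
  carrier := {x | ∀ g, 𝒜.comp x g ∈ nonunitsOfDeg hL hO g}
  zero_mem' g := by
    rw [ZeroMemClass.coe_zero, comp_zero]
    exact zero_mem _
  add_mem' hx hy g := by
    rw [Subring.coe_add, 𝒜.comp_add]
    exact add_mem (hx g) (hy g)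
  smul_mem' c x hx g := by
    change 𝒜.comp (c * x) g ∈ _
    rw [← 𝒜.sum_comp_support c, Finset.sum_mul, comp_finsetSum]
    refine sum_mem fun h _ => ?_
    rw [𝒜.comp_mul_of_mem (𝒜.comp_mem _ h)]
    have hmem := mul_mem_nonunitsOfDeg (hO.2.1 c c.2 h) (𝒜.comp_mem c h) (hx (h⁻¹ * g))
    rwa [mul_inv_cancel_left] at hmem

lemma eq_zero_of_mem_gradedMaximalIdeal (hl : 𝒜.IsGradedSubfield l) (hlO : l ≤ O) {x : O}
    (hxl : (x : L) ∈ l) (hx : x ∈ gradedMaximalIdeal hL hO) : x = 0 := by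
  by_contra hx0
  obtain ⟨g, hg⟩ := 𝒜.exists_comp_ne_zero (fun h => hx0 (Subtype.ext h))
  exact (hx g).2 _ (hlO (hl.2 _ (hl.1 x hxl g) (isHomog_comp _ g) hg))
    (hL.mul_inverse (isHomog_comp _ g) hg)

lemma mem_gradedMaximalIdeal_of_not_isUnit {x : O} (hx : 𝒜.IsHomog (x : L)) (hnu : ¬IsUnit x) :
    x ∈ gradedMaximalIdeal hL hO := by
  intro g
  rcases hx.comp_eq_or g with h | h
  · exact ⟨𝒜.comp_mem _ g, fun y hy hxy =>
      hnu (.of_mul_eq_one ⟨y, hy⟩ (Subtype.ext (by rwa [h] at hxy)))⟩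
  · exact h ▸ zero_mem _

lemma le_of_gradedMaximalIdeal_le {O' : Subring L} (hO' : 𝒜.IsGradedSubring O')
    (hK : 𝒜.IsGradedSubfield K) (hO'K : O' ≤ K)
    (hM : ∀ z ∈ gradedMaximalIdeal hL hO, (z : L) ∈ K → 𝒜.IsHomog (z : L) → (z : L) ∈ O')
    {x : L} (hxO : x ∈ O) (hxK : x ∈ K) (hx : 𝒜.IsHomog x) (hxO' : x ∉ O') : O' ≤ O := by
  refine hO'.le_of_homog fun f hfO' hf => by_contra fun hfO => hxO' ?_
  have hf0 : f ≠ 0 := fun h => hfO (h ▸ zero_mem O)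
  have hinv : Ring.inverse f ∈ O := (hO.2.2 f trivial hf0 hf).resolve_left hfO
  have hnu : ¬IsUnit (⟨Ring.inverse f, hinv⟩ : O) := fun hu => by
    obtain ⟨y, hy⟩ := isUnit_iff_exists_inv.mp hu
    exact hfO (left_inv_eq_right_inv (hL.mul_inverse hf hf0) (congrArg Subtype.val hy) ▸ y.2)
  have hquot : Ring.inverse f * x ∈ O' :=
    hM (⟨Ring.inverse f, hinv⟩ * ⟨x, hxO⟩) (Ideal.mul_mem_right _ _
        (mem_gradedMaximalIdeal_of_not_isUnit (hL.isHomog_inverse hf) hnu))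
      (MulMemClass.mul_mem (hK.2 f (hO'K hfO') hf hf0) hxK) ((hL.isHomog_inverse hf).mul hx)
  rw [← one_mul x, ← hL.mul_inverse hf hf0, mul_assoc]
  exact MulMemClass.mul_mem hfO' hquot

lemma isIntegralElem_mk_of_isIntegral {D : Subring L} (hkO : k ≤ O) (hDO : D ≤ O) (I : Ideal O)
    (hD : ∀ d (hd : d ∈ D), ((Ideal.Quotient.mk I).comp (Subring.inclusion hkO)).IsIntegralElem
      (Ideal.Quotient.mk I ⟨d, hDO hd⟩)) {x : O} (hx : IsIntegral D (x : L)) :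
    ((Ideal.Quotient.mk I).comp (Subring.inclusion hkO)).IsIntegralElem
      (Ideal.Quotient.mk I x) := by
  let : Algebra k (O ⧸ I) :=
    ((Ideal.Quotient.mk I).comp (Subring.inclusion hkO)).toAlgebra
  let ρ : D →+* integralClosure k (O ⧸ I) :=
    ((Ideal.Quotient.mk I).comp (Subring.inclusion hDO)).codRestrict _ fun d => hD d d.2
  obtain ⟨p, hp, hpx⟩ := hx
  have hpxO : p.eval₂ (Subring.inclusion hDO) x = 0 := Subtype.ext <| by
    rw [← Subring.coe_subtype, hom_eval₂]
    exact hpx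
  refine isIntegral_trans (A := integralClosure k (O ⧸ I)) _ ⟨p.map ρ, hp.map ρ, ?_⟩
  rw [eval₂_map]
  exact (hom_eval₂ p _ (Ideal.Quotient.mk I) x).symm.trans (by rw [hpxO, map_zero])

-- Otherwise some valuation ring `O'` of `K` contains all elements of `O ⊓ K` with integral residue,
-- in particular those with residue zero, but not `x`; then `O' < O ⊓ K`.
lemma isIntegralElem_mk_of_minimal (hkO : k ≤ O) (hk : 𝒜.IsGradedSubring k)
    (hK : 𝒜.IsGradedSubfield K)
    (hmin : Minimal (fun O => IsGVRofSubfield 𝒜 K O ∧ k ≤ O) (O ⊓ K)) {x : O}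
    (hxK : (x : L) ∈ K) (hx : 𝒜.IsHomog (x : L)) :
    ((Ideal.Quotient.mk (gradedMaximalIdeal hL hO)).comp
      (Subring.inclusion hkO)).IsIntegralElem (Ideal.Quotient.mk (gradedMaximalIdeal hL hO) x) := by
  let π := Ideal.Quotient.mk (gradedMaximalIdeal hL hO)
  let : Algebra k (O ⧸ gradedMaximalIdeal hL hO) := (π.comp (Subring.inclusion hkO)).toAlgebra
  let T : Set L := {d | 𝒜.IsHomog d ∧ d ∈ K ∧ ∃ hd : d ∈ O, IsIntegral k (π ⟨d, hd⟩)}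
  let D := Subring.closure (k ∪ T)
  have hDI : D ≤ ((integralClosure k (O ⧸ gradedMaximalIdeal hL hO)).toSubring.comap π).map
      O.subtype := by
    refine Subring.closure_le.mpr (Set.union_subset (fun c hc => ?_) ?_)
    · exact ⟨⟨c, hkO hc⟩, isIntegral_algebraMap (x := (⟨c, hc⟩ : k)), rfl⟩
    · exact fun d ⟨_, _, hd, hint⟩ => ⟨⟨d, hd⟩, hint, rfl⟩
  have hDO : D ≤ O := hDI.trans fun _ ⟨d, _, hd⟩ => hd ▸ d.2
  have hDK : D ≤ K := Subring.closure_le.mpr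
    (Set.union_subset (hmin.prop.2.trans inf_le_right) fun d hd => hd.2.1)
  by_contra hnot
  have hxD : ¬IsIntegral D (x : L) := fun hint => hnot <|
    isIntegralElem_mk_of_isIntegral hkO hDO _ (fun d hd => by
      obtain ⟨d', hd', rfl⟩ := hDI hd
      exact hd') hint
  obtain ⟨O', hO', hDO', hxO'⟩ := exists_isGVRofSubfield_notMem hL hK
    (hk.closure_union fun d hd => hd.1) hDK hxK hx hxD
  have hle : O' ≤ O := le_of_gradedMaximalIdeal_le hO'.2.1 hK hO'.1 (fun z hz hzK hzh =>
    hDO' (Subring.subset_closure (.inr ⟨hzh, hzK, z.2, by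
      change IsIntegral k (π z)
      rw [Ideal.Quotient.eq_zero_iff_mem.mpr hz]
      exact isIntegral_zero⟩))) x.2 hxK hx hxO'
  exact hxO' (hmin.2 ⟨hO', le_closure_union.trans hDO'⟩
    (le_inf hle hO'.1) ⟨x.2, hxK⟩)

end MaximalIdeal

section HomogeneousPolynomials

variable {F : Subring L} {σ : Type*} {u : σ → L}

lemma exists_coeff_eq_comp (hF : 𝒜.IsGradedSubring F) {x : L} {d : G} (hx : x ∈ 𝒜.deg d) (p : F[X])
    (g : G) : ∃ q : F[X], (∀ n, (q.coeff n : L) = 𝒜.comp (p.coeff n) (g * (d ^ n)⁻¹)) ∧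
      aeval x q = 𝒜.comp (aeval x p) g := by
  let c (n : ℕ) : F := ⟨𝒜.comp (p.coeff n) (g * (d ^ n)⁻¹), hF _ (p.coeff n).2 _⟩
  refine ⟨∑ n ∈ p.support, monomial n (c n), fun n => ?_, ?_⟩
  · simp only [finsetSum_coeff, coeff_monomial, Finset.sum_ite_eq']
    split_ifs with hn
    · rfl
    · rw [notMem_support_iff.mp hn, ZeroMemClass.coe_zero, comp_zero]
  · rw [map_sum, aeval_def, eval₂_eq_sum, sum_def, comp_finsetSum]
    refine Finset.sum_congr rfl fun n _ => ?_
    rw [aeval_monomial]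
    exact (𝒜.comp_mul_of_mem_right (𝒜.pow_mem_deg hx n) _ g).symm

lemma exists_mvPolynomial_coeff_eq_comp (hF : 𝒜.IsGradedSubring F) {d : σ → G}
    (hu : ∀ i, u i ∈ 𝒜.deg (d i)) (P : MvPolynomial σ F) (g : G) :
    ∃ Q : MvPolynomial σ F,
      (∀ m, (Q.coeff m : F) = 𝒜.comp (P.coeff m : F) (g * (m.prod fun i n => d i ^ n)⁻¹)) ∧
      MvPolynomial.aeval u Q = 𝒜.comp (MvPolynomial.aeval u P) g := by
  let c (m : σ →₀ ℕ) : F :=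
    ⟨𝒜.comp (P.coeff m : F) (g * (m.prod fun i n => d i ^ n)⁻¹), hF _ (P.coeff m).2 _⟩
  refine ⟨∑ m ∈ P.support, MvPolynomial.monomial m (c m), fun m => ?_, ?_⟩
  · classical
    simp only [MvPolynomial.coeff_sum, MvPolynomial.coeff_monomial, Finset.sum_ite_eq']
    split_ifs with hm
    · rfl
    · rw [MvPolynomial.notMem_support_iff.mp hm, ZeroMemClass.coe_zero, comp_zero]
  · rw [map_sum, MvPolynomial.aeval_def, MvPolynomial.eval₂_eq, comp_finsetSum]
    refine Finset.sum_congr rfl fun m _ => ?_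
    rw [MvPolynomial.aeval_monomial]
    have hm : ∏ i ∈ m.support, u i ^ m i ∈ 𝒜.deg (∏ i ∈ m.support, d i ^ m i) :=
      𝒜.prod_mem_deg _ fun i _ => 𝒜.pow_mem_deg (hu i) (m i)
    exact (𝒜.comp_mul_of_mem_right hm _ g).symm

lemma exists_isHomog_coeff_ne_zero_aeval_eq_zero (hF : 𝒜.IsGradedSubring F)
    (hu : ∀ i, 𝒜.IsHomog (u i)) (h : ¬AlgebraicIndependent F u) :
    ∃ P : MvPolynomial σ F, P ≠ 0 ∧ (∀ m, 𝒜.IsHomog (P.coeff m : F)) ∧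
      MvPolynomial.aeval u P = 0 := by
  choose d hd using hu
  rw [algebraicIndependent_iff] at h
  push Not at h
  obtain ⟨P, hP, hP0⟩ := h
  obtain ⟨m, hm⟩ := MvPolynomial.ne_zero_iff.mp hP0
  obtain ⟨g, hg⟩ := 𝒜.exists_comp_ne_zero (fun h => hm (Subtype.ext h))
  obtain ⟨Q, hQ, hQu⟩ :=
    exists_mvPolynomial_coeff_eq_comp hF hd P (g * m.prod fun i n => d i ^ n)
  refine ⟨Q, fun h => hg ?_, fun m => hQ m ▸ isHomog_comp _ _, by rw [hQu, hP, comp_zero]⟩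
  simpa [h] using (hQ m).symm

lemma exists_isHomog_coeff_aeval_eq (hF : 𝒜.IsGradedSubring F) (hu : ∀ i, 𝒜.IsHomog (u i))
    (P : MvPolynomial σ F) (hP : 𝒜.IsHomog (MvPolynomial.aeval u P)) :
    ∃ Q : MvPolynomial σ F, (∀ m, 𝒜.IsHomog (Q.coeff m : F)) ∧
      MvPolynomial.aeval u Q = MvPolynomial.aeval u P := by
  choose d hd using hu
  obtain ⟨g, hg⟩ := hP
  obtain ⟨Q, hQ, hQu⟩ := exists_mvPolynomial_coeff_eq_comp hF hd P g
  exact ⟨Q, fun m => hQ m ▸ isHomog_comp _ _, by rw [hQu, 𝒜.comp_of_mem hg]⟩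

lemma IsGradedSubfield.isUnit_of_isHomog (hF : 𝒜.IsGradedSubfield F) (hL : 𝒜.IsGradedField)
    {x : F} (hx : 𝒜.IsHomog (x : L)) (h0 : x ≠ 0) : IsUnit x :=
  have h0' : (x : L) ≠ 0 := fun h => h0 (Subtype.ext h)
  .of_mul_eq_one ⟨_, hF.2 x x.2 hx h0'⟩ (Subtype.ext (hL.mul_inverse hx h0'))

end HomogeneousPolynomials

section AlgebraicIndependence

variable {k K l O : Subring L} {σ : Type*} {u : σ → L}

lemma exists_mem_forall_mul_inverse_mem (hL : 𝒜.IsGradedField) (hO : IsGVRofSubfield 𝒜 ⊤ O)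
    {s : Finset L} (hs : s.Nonempty) (hsh : ∀ a ∈ s, 𝒜.IsHomog a) (hs0 : 0 ∉ s) :
    ∃ b ∈ s, ∀ a ∈ s, a * Ring.inverse b ∈ O := by
  induction hs using Finset.Nonempty.cons_induction with
  | singleton a =>
    have ha0 : a ≠ 0 := fun h => hs0 (by simp [h])
    exact ⟨a, by simp, by simp [hL.mul_inverse (hsh a (by simp)) ha0, OneMemClass.one_mem]⟩
  | cons a s _ _ ih =>
    simp only [Finset.mem_cons, forall_eq_or_imp, not_or] at hsh hs0 ⊢
    obtain ⟨b, hb, hbO⟩ := ih hsh.2 hs0.2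
    have hb0 : b ≠ 0 := ne_of_mem_of_not_mem hb hs0.2
    have hbinv := hL.inverse_mul (hsh.2 b hb) hb0
    have ha0 : a ≠ 0 := fun h => hs0.1 h.symm
    have hainv := hL.mul_inverse hsh.1 ha0
    have hquot : ∀ c, c * Ring.inverse b * (b * Ring.inverse a) = c * Ring.inverse a := fun c => by
      linear_combination c * Ring.inverse a * hbinv
    have hab0 : a * Ring.inverse b ≠ 0 := fun h => ha0 (by
      linear_combination b * h - a * hbinv)
    rcases hO.2.2 _ trivial hab0 (hsh.1.mul (hL.isHomog_inverse (hsh.2 b hb))) with hab | hab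
    · exact ⟨b, .inr hb, hab, hbO⟩
    · have hba : b * Ring.inverse a ∈ O := by
        rwa [← left_inv_eq_right_inv (Ring.inverse_mul_cancel _ (hL.2 _ (hsh.1.mul
          (hL.isHomog_inverse (hsh.2 b hb))) hab0)) ((hquot a).trans hainv)]
      refine ⟨a, .inl rfl, hainv ▸ OneMemClass.one_mem O, fun c hc => ?_⟩
      rw [← hquot c]
      exact MulMemClass.mul_mem (hbO c hc) hba

lemma exists_primitive_of_not_algebraicIndependent (hL : 𝒜.IsGradedField)
    (hO : IsGVRofSubfield 𝒜 ⊤ O) (hK : 𝒜.IsGradedSubfield K) (hu : ∀ i, 𝒜.IsHomog (u i))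
    (h : ¬AlgebraicIndependent K u) :
    ∃ P : MvPolynomial σ O, (∃ m, P.coeff m = 1) ∧
      (∀ m, ((P.coeff m : O) : L) ∈ K ∧ 𝒜.IsHomog (P.coeff m : O)) ∧
      MvPolynomial.aeval u P = 0 := by
  classical
  obtain ⟨P, hP0, hPh, hPu⟩ := exists_isHomog_coeff_ne_zero_aeval_eq_zero hK.1 hu h
  let c (m : σ →₀ ℕ) : L := (P.coeff m : K)
  obtain ⟨_, hb, hbO⟩ := exists_mem_forall_mul_inverse_mem hL hO (s := P.support.image c)
    (by simpa using hP0) (by simpa using fun m _ => hPh m) (by simp [c])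
  obtain ⟨m₁, hm₁, rfl⟩ := Finset.mem_image.mp hb
  have hc0 : c m₁ ≠ 0 := by simpa [c] using hm₁
  have hcO : ∀ m, c m * Ring.inverse (c m₁) ∈ O := fun m => by
    by_cases hm : m ∈ P.support
    · exact hbO _ (Finset.mem_image_of_mem c hm)
    · have hcm : c m = 0 := by simpa [c] using hm
      simp only [hcm, zero_mul, zero_mem]
  let P' : MvPolynomial σ L := MvPolynomial.C (Ring.inverse (c m₁)) * P.map K.subtype
  have hP' : ∀ m, P'.coeff m = c m * Ring.inverse (c m₁) := fun m => by
    rw [MvPolynomial.coeff_C_mul, MvPolynomial.coeff_map, mul_comm]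
    rfl
  obtain ⟨Q, hQ⟩ : P' ∈ Set.range (MvPolynomial.map O.subtype) :=
    MvPolynomial.mem_range_map_iff_coeffs_subset.mpr fun x hx => by
      obtain ⟨m, -, rfl⟩ := MvPolynomial.mem_coeffs_iff.mp hx
      exact ⟨⟨_, hcO m⟩, (hP' m).symm⟩
  have hQc : ∀ m, ((Q.coeff m : O) : L) = c m * Ring.inverse (c m₁) := fun m => by
    rw [← hP', ← hQ, MvPolynomial.coeff_map, Subring.coe_subtype]
  refine ⟨Q, ⟨m₁, Subtype.ext ((hQc m₁).trans (hL.mul_inverse (hPh m₁) hc0))⟩, fun m => ?_, ?_⟩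
  · rw [hQc]
    exact ⟨MulMemClass.mul_mem (P.coeff m).2 (hK.2 _ (P.coeff m₁).2 (hPh m₁) hc0),
      (hPh m).mul (hL.isHomog_inverse (hPh m₁))⟩
  · have hQu : MvPolynomial.aeval u Q = MvPolynomial.eval u P' := by
      rw [← hQ, MvPolynomial.eval_map]
      rfl
    have hPu' : MvPolynomial.eval u (P.map K.subtype) = 0 := by
      rw [MvPolynomial.eval_map]
      exact hPu
    rw [hQu, map_mul, hPu', mul_zero]

lemma eq_zero_of_eval₂_mk_eq_zero {hL : 𝒜.IsGradedField} {hO : IsGVRofSubfield 𝒜 ⊤ O}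
    (hl : 𝒜.IsGradedSubfield l) (hkl : k ≤ l) (hlO : l ≤ O) (hul : ∀ i, u i ∈ l)
    (hind : AlgebraicIndependent k u) {r : MvPolynomial σ k}
    (hr : r.eval₂ ((Ideal.Quotient.mk (gradedMaximalIdeal hL hO)).comp
      (Subring.inclusion (hkl.trans hlO)))
      (fun i => Ideal.Quotient.mk _ ⟨u i, hlO (hul i)⟩) = 0) : r = 0 := by
  let x : O := r.eval₂ (Subring.inclusion (hkl.trans hlO)) fun i => ⟨u i, hlO (hul i)⟩
  have hx : (x : L) = MvPolynomial.aeval u r := MvPolynomial.hom_eval₂ r _ O.subtype _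
  have hxl : (x : L) ∈ l := hx ▸ MvPolynomial.eval₂_mem (fun m _ => hkl (r.coeff m).2) hul
  have hx0 : x = 0 := eq_zero_of_mem_gradedMaximalIdeal hl hlO hxl <|
    Ideal.Quotient.eq_zero_iff_mem.mp ((MvPolynomial.hom_eval₂ ..).trans hr)
  exact algebraicIndependent_iff.mp hind r (by rw [← hx, hx0, ZeroMemClass.coe_zero])

lemma algebraicIndependent_of_minimal (hL : 𝒜.IsGradedField) (hO : IsGVRofSubfield 𝒜 ⊤ O)
    (hk : 𝒜.IsGradedSubring k) (hK : 𝒜.IsGradedSubfield K) (hl : 𝒜.IsGradedSubfield l)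
    (hkl : k ≤ l) (hlO : l ≤ O)
    (hmin : Minimal (fun O => IsGVRofSubfield 𝒜 K O ∧ k ≤ O) (O ⊓ K))
    (hu : ∀ i, 𝒜.IsHomog (u i)) (hul : ∀ i, u i ∈ l) (hind : AlgebraicIndependent k u) :
    AlgebraicIndependent K u := by
  let I := gradedMaximalIdeal hL hO
  let π := Ideal.Quotient.mk I
  let : Algebra k (O ⧸ I) := (π.comp (Subring.inclusion (hkl.trans hlO))).toAlgebra
  by_contra hnot
  obtain ⟨P, ⟨m₁, hm₁⟩, hP, hPu⟩ := exists_primitive_of_not_algebraicIndependent hL hO hK hu hnot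
  obtain ⟨m⟩ := nonempty_monomialOrder σ
  let v (i : σ) : O := ⟨u i, hlO (hul i)⟩
  have : Nontrivial (O ⧸ I) := by
    have := hL.1
    refine ⟨π 1, 0, fun h => one_ne_zero (α := L) ?_⟩
    exact congrArg Subtype.val (eq_zero_of_mem_gradedMaximalIdeal hl hlO
      (OneMemClass.one_mem l) (Ideal.Quotient.eq_zero_iff_mem.mp h))
  have hlead : IsUnit (m.leadingCoeff (P.map π)) := by
    have hP0 : m.leadingCoeff (P.map π) ≠ 0 := m.leadingCoeff_ne_zero_iff.mpr fun h => by
      have h1 : π 1 = 0 := by rw [← hm₁, ← MvPolynomial.coeff_map, h, MvPolynomial.coeff_zero]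
      exact one_ne_zero ((map_one π).symm.trans h1)
    rw [MonomialOrder.leadingCoeff, MvPolynomial.coeff_map] at hP0 ⊢
    refine IsUnit.map π (by_contra fun hnu => hP0 ?_)
    exact Ideal.Quotient.eq_zero_iff_mem.mpr (mem_gradedMaximalIdeal_of_not_isUnit (hP _).2 hnu)
  refine not_algebraicIndependent_of_isIntegral_coeff (R := k) m (u := π ∘ v) (P := P.map π)
    hlead.mem_nonZeroDivisors (fun n => ?_) ?_ (algebraicIndependent_iff.mpr fun r hr => ?_)
  · rw [MvPolynomial.coeff_map]
    exact isIntegralElem_mk_of_minimal (hkl.trans hlO) hk hK hmin (hP n).1 (hP n).2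
  · have hPv : MvPolynomial.eval v P = 0 :=
      Subtype.ext ((MvPolynomial.eval₂_comp O.subtype v P).trans hPu)
    change MvPolynomial.eval (π ∘ v) _ = 0
    rw [← MvPolynomial.map_eval, hPv, map_zero]
  · exact eq_zero_of_eval₂_mk_eq_zero hl hkl hlO hul hind hr

end AlgebraicIndependence

section Normality

variable {F S : Subring L} {σ : Type*} {u : σ → L} {x y z : L}

lemma mul_sub_pow_mem (hzx : ∀ n, z * x ^ n ∈ S) (hy : y ∈ S) (n : ℕ) :
    z * (x - y) ^ n ∈ S := by
  rw [sub_eq_add_neg, add_pow, Finset.mul_sum]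
  refine sum_mem fun i _ => ?_
  rw [mul_assoc, ← mul_assoc z]
  exact MulMemClass.mul_mem (hzx i)
    (MulMemClass.mul_mem (pow_mem (neg_mem hy) _) (natCast_mem S _))

lemma exists_isHomog_coeff_aeval_eq_mul_sub (hF : 𝒜.IsGradedSubring F) (hu : ∀ i, 𝒜.IsHomog (u i))
    (hx : 𝒜.IsHomog x) (m : MonomialOrder σ) {Z : MvPolynomial σ F}
    (hZ : IsUnit (m.leadingCoeff Z)) (hz : 𝒜.IsHomog (MvPolynomial.aeval u Z))
    (hzx : MvPolynomial.aeval u Z * x ∈ Subring.closure (F ∪ Set.range u)) :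
    ∃ y ∈ Subring.closure (F ∪ Set.range u), ∃ R : MvPolynomial σ F,
      (∀ n, 𝒜.IsHomog (R.coeff n : F)) ∧ (∀ n ∈ R.support, ¬m.degree Z ≤ n) ∧
      MvPolynomial.aeval u R = MvPolynomial.aeval u Z * (x - y) := by
  obtain ⟨Y, hY⟩ := mem_closure_union_range_iff.mp hzx
  obtain ⟨Q, R, hYQR, -, hR⟩ := m.div_single hZ Y
  choose d hd using hu
  obtain ⟨g, hg⟩ := hx
  obtain ⟨h, hh⟩ := hz
  obtain ⟨R', hR', hR'u⟩ := exists_mvPolynomial_coeff_eq_comp hF hd R (h * g)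
  refine ⟨𝒜.comp (MvPolynomial.aeval u Q) g, ?_, R', fun n => hR' n ▸ isHomog_comp _ _,
    fun n hn => hR n ?_, ?_⟩
  · have hS := hF.closure_union (s := Set.range u) (by simpa using fun i => ⟨d i, hd i⟩)
    exact hS _ (mem_closure_union_range_iff.mpr ⟨Q, rfl⟩) g
  · rw [MvPolynomial.mem_support_iff] at hn ⊢
    exact fun h0 => hn <| Subtype.ext <| by
      simpa only [h0, ZeroMemClass.coe_zero, comp_zero] using hR' n
  · have hcomp := congrArg (𝒜.comp · (h * g)) hY
    simp only [hYQR, map_add, map_mul, 𝒜.comp_add, mul_comm (MvPolynomial.aeval u Q),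
      𝒜.comp_mul_of_mem hh, inv_mul_cancel_left, 𝒜.comp_of_mem hg] at hcomp
    rw [hR'u, mul_sub, ← hcomp, add_sub_cancel_left]

-- Divide `z * x` by `z` as polynomials in `u`. The remainder is `R = z * x'` with `z * x' ^ n`
-- in `F[u]` for all `n`, so that `z ^ n ∣ R ^ (n + 1)`; for reasons of degree, `R = 0`.
lemma mem_closure_of_forall_mul_pow_mem (hL : 𝒜.IsGradedField) (hF : 𝒜.IsGradedSubfield F)
    (hu : ∀ i, 𝒜.IsHomog (u i)) (hind : AlgebraicIndependent F u)
    (hx : 𝒜.IsHomog x) (hz : 𝒜.IsHomog z) (hz0 : z ≠ 0)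
    (hzx : ∀ n, z * x ^ n ∈ Subring.closure (F ∪ Set.range u)) :
    x ∈ Subring.closure (F ∪ Set.range u) := by
  obtain ⟨m⟩ := nonempty_monomialOrder σ
  obtain ⟨Z, rfl⟩ := mem_closure_union_range_iff.mp (by simpa using hzx 0)
  obtain ⟨Z', hZ', hZZ'⟩ := exists_isHomog_coeff_aeval_eq hF.1 hu Z hz
  rw [← hZZ'] at hz hz0 hzx
  have hlead {P : MvPolynomial σ F} (hP : ∀ n, 𝒜.IsHomog (P.coeff n : F)) (hP0 : P ≠ 0) :
      IsUnit (m.leadingCoeff P) :=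
    hF.isUnit_of_isHomog hL (hP _) (m.leadingCoeff_ne_zero_iff.mpr hP0)
  have hZlead : IsUnit (m.leadingCoeff Z') := hlead hZ' fun h => hz0 (by rw [h, map_zero])
  obtain ⟨y, hy, R, hRh, hR, hRu⟩ := exists_isHomog_coeff_aeval_eq_mul_sub hF.1 hu hx m hZlead hz
    (by simpa using hzx 1)
  have hdvd (n : ℕ) : ∃ W, Z' ^ n * W = R ^ (n + 1) := by
    obtain ⟨W, hW⟩ := mem_closure_union_range_iff.mp (mul_sub_pow_mem hzx hy (n + 1))
    refine ⟨W, hind ?_⟩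
    rw [map_mul, map_pow, map_pow, hW, hRu, mul_pow, ← mul_assoc, ← pow_succ]
  have hR0 : R = 0 := by_contra fun hR0 =>
    hR _ (m.degree_mem_support hR0) <|
      degree_le_of_forall_exists_pow_mul_eq m hZlead.mem_nonZeroDivisors
        (hlead hRh hR0) hdvd
  have hxy : x - y = 0 := (hL.2 _ hz hz0).mul_right_eq_zero.mp (by rw [← hRu, hR0, map_zero])
  rwa [sub_eq_zero.mp hxy]

lemma mem_closure_of_isIntegral_of_mul_mem (hL : 𝒜.IsGradedField) (hF : 𝒜.IsGradedSubfield F)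
    (hu : ∀ i, 𝒜.IsHomog (u i)) (hind : AlgebraicIndependent F u)
    (hx : 𝒜.IsHomog x) (hint : IsIntegral (Subring.closure (F ∪ Set.range u)) x)
    (hz : 𝒜.IsHomog z) (hz0 : z ≠ 0) (hzmem : z ∈ Subring.closure (F ∪ Set.range u))
    (hzx : z * x ∈ Subring.closure (F ∪ Set.range u)) :
    x ∈ Subring.closure (F ∪ Set.range u) := by
  have hS : 𝒜.IsGradedSubring (Subring.closure (F ∪ Set.range u)) :=
    hF.1.closure_union (by simpa using hu)
  have := hL.1
  have hzreg : (⟨z, hzmem⟩ : Subring.closure (F ∪ Set.range u)) ∈ nonZeroDivisors _ :=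
    mem_nonZeroDivisors_iff_right.mpr fun w hw => Subtype.ext <|
      (hL.2 z hz hz0).mul_left_eq_zero.mp (congrArg Subtype.val hw)
  obtain ⟨r, hr, hrx⟩ := hint.isAlmostIntegral_of_exists_smul_mem_range
    ⟨⟨z, hzmem⟩, hzreg, ⟨⟨_, hzx⟩, rfl⟩⟩
  obtain ⟨d, hd⟩ := id hx
  obtain ⟨g, hg⟩ := 𝒜.exists_comp_ne_zero (fun h => nonZeroDivisors.ne_zero hr (Subtype.ext h))
  refine mem_closure_of_forall_mul_pow_mem hL hF hu hind hx (isHomog_comp _ g) hg fun n => ?_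
  obtain ⟨s, hs⟩ := hrx n
  have hcomp : 𝒜.comp r g * x ^ n = 𝒜.comp s (g * d ^ n) := by
    rw [show (s : L) = r * x ^ n from hs, 𝒜.comp_mul_of_mem_right (𝒜.pow_mem_deg hd n),
      mul_inv_cancel_right]
  rw [hcomp]
  exact hS s s.2 _

end Normality

section MinimalPolynomial

variable {F R : Subring L} {x : L}

lemma degree_le_of_coeff_eq_comp {p q : F[X]} {g : ℕ → G}
    (h : ∀ n, (q.coeff n : L) = 𝒜.comp (p.coeff n) (g n)) : q.degree ≤ p.degree :=
  degree_mono fun n => by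
    simp only [mem_support_iff, not_imp_not]
    exact fun hn => Subtype.ext (by simp only [h n, hn, ZeroMemClass.coe_zero, comp_zero])

lemma exists_isHomog_leadingCoeff_aeval_eq_zero (hF : 𝒜.IsGradedSubring F) (hx : 𝒜.IsHomog x)
    {p : F[X]} (hp : p ≠ 0) (hpx : aeval x p = 0) :
    ∃ q : F[X], q ≠ 0 ∧ 𝒜.IsHomog (q.leadingCoeff : L) ∧ aeval x q = 0 ∧ q.degree ≤ p.degree := by
  obtain ⟨d, hd⟩ := hx
  obtain ⟨g, hg⟩ := 𝒜.exists_comp_ne_zero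
    (fun h => leadingCoeff_ne_zero.mpr hp (Subtype.ext h) : (p.leadingCoeff : L) ≠ 0)
  obtain ⟨q, hq, hqx⟩ := exists_coeff_eq_comp hF hd p (g * d ^ p.natDegree)
  refine ⟨q, fun h => hg ?_, hq _ ▸ isHomog_comp _ _, by rw [hqx, hpx, comp_zero],
    degree_le_of_coeff_eq_comp hq⟩
  simpa only [h, coeff_zero, ZeroMemClass.coe_zero, mul_inv_cancel_right, coeff_natDegree] using
    (hq p.natDegree).symm

lemma eq_zero_of_aeval_eq_zero_of_degree_lt_minpoly (hL : 𝒜.IsGradedField)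
    (hF : 𝒜.IsGradedSubfield F) (hx : 𝒜.IsHomog x) {r : F[X]} (hr : aeval x r = 0)
    (hdeg : r.degree < (minpoly F x).degree) : r = 0 := by
  by_contra hr0
  obtain ⟨q, hq0, hq, hqx, hqr⟩ := exists_isHomog_leadingCoeff_aeval_eq_zero hF.1 hx hr0 hr
  obtain ⟨c, hc⟩ := isUnit_iff_exists_inv.mp <|
    hF.isUnit_of_isHomog hL hq (leadingCoeff_ne_zero.mpr hq0)
  refine (minpoly.min F x (monic_mul_C_of_leadingCoeff_mul_eq_one hc) ?_).not_gt ?_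
  · rw [map_mul, hqx, zero_mul]
  · rw [degree_mul_C_of_isUnit (.of_mul_eq_one_right _ hc)]
    exact hqr.trans_lt hdeg

lemma minpoly_dvd_of_aeval_eq_zero (hL : 𝒜.IsGradedField) (hF : 𝒜.IsGradedSubfield F)
    (hx : 𝒜.IsHomog x) (hint : IsIntegral F x) {q : F[X]} (hq : aeval x q = 0) :
    minpoly F x ∣ q := by
  have := hL.1
  rw [← modByMonic_eq_zero_iff_dvd (minpoly.monic hint)]
  exact eq_zero_of_aeval_eq_zero_of_degree_lt_minpoly hL hF hx
    (by rw [aeval_modByMonic_eq_self_of_root (minpoly.aeval F x), hq])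
    (degree_modByMonic_lt _ (minpoly.monic hint))

lemma isHomog_coeff_minpoly (hL : 𝒜.IsGradedField) (hF : 𝒜.IsGradedSubfield F)
    (hx : 𝒜.IsHomog x) (hint : IsIntegral F x) (n : ℕ) : 𝒜.IsHomog ((minpoly F x).coeff n : F) := by
  have := hL.1
  obtain ⟨d, hd⟩ := id hx
  obtain ⟨q, hq, hqx⟩ := exists_coeff_eq_comp hF.1 hd (minpoly F x) (d ^ (minpoly F x).natDegree)
  have hqdeg : q.degree ≤ (minpoly F x).degree := degree_le_of_coeff_eq_comp hq
  have hqmonic : q.Monic := by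
    refine monic_of_natDegree_le_of_coeff_eq_one _ (natDegree_le_natDegree hqdeg) (Subtype.ext ?_)
    rw [hq, mul_inv_cancel, (minpoly.monic hint).coeff_natDegree]
    exact 𝒜.comp_of_mem 𝒜.one_mem
  have hqmin : q = minpoly F x := by
    refine minpoly.unique' F x hqmonic (by rw [hqx, minpoly.aeval, comp_zero]) fun r hr => ?_
    exact or_iff_not_imp_right.mpr fun hrx =>
      eq_zero_of_aeval_eq_zero_of_degree_lt_minpoly hL hF hx (not_not.mp hrx) (hr.trans_le hqdeg)
  rw [← hqmin, hq]
  exact isHomog_comp _ _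

lemma isIntegral_coeff_minpoly (hL : 𝒜.IsGradedField) (hF : 𝒜.IsGradedSubfield F) (hRF : R ≤ F)
    (hx : 𝒜.IsHomog x) (hint : IsIntegral R x) (n : ℕ) :
    IsIntegral R ((minpoly F x).coeff n : L) := by
  let : Algebra R F := (Subring.inclusion hRF).toAlgebra
  have := IsScalarTower.of_algebraMap_eq' (R := R) (S := F) (A := L) rfl
  have hintF : IsIntegral F x := isIntegral_mono_subring hRF hint
  obtain ⟨p, hp, hpx⟩ := hint
  have hdvd : minpoly F x ∣ p.map (algebraMap R F) :=
    minpoly_dvd_of_aeval_eq_zero hL hF hx hintF (by rwa [aeval_map_algebraMap])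
  exact (isIntegral_coeff_of_dvd p _ hp (minpoly.monic hintF) hdvd n).algebraMap

end MinimalPolynomial

section FractionField

variable {S : Subring L} {x : L}

/-- The multiplicative set of nonzero homogeneous elements of a subring of a graded field: the
denominators of its graded fraction field. -/
def nonzeroHomog (hL : 𝒜.IsGradedField) (S : Subring L) : Submonoid L where
  carrier := {a | a ∈ S ∧ 𝒜.IsHomog a ∧ a ≠ 0}
  one_mem' :=
    have := hL.1
    ⟨OneMemClass.one_mem S, isHomog_one, one_ne_zero⟩
  mul_mem' ha hb :=
    ⟨MulMemClass.mul_mem ha.1 hb.1, ha.2.1.mul hb.2.1, hL.mul_ne_zero ha.2.1 ha.2.2 hb.2.2⟩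

lemma exists_mul_eq_one_of_mem_inverses (hL : 𝒜.IsGradedField) {y : L}
    (hy : y ∈ {y | ∃ x ∈ S, x ≠ 0 ∧ 𝒜.IsHomog x ∧ y = Ring.inverse x}) :
    ∃ a ∈ nonzeroHomog hL S, a * y = 1 := by
  obtain ⟨a, ha, ha0, hah, rfl⟩ := hy
  exact ⟨a, ⟨ha, hah, ha0⟩, hL.mul_inverse hah ha0⟩

lemma exists_mul_mem_of_mem_fracIn (hL : 𝒜.IsGradedField) (hx : x ∈ 𝒜.fracIn S) :
    ∃ a ∈ nonzeroHomog hL S, a * x ∈ S :=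
  exists_mul_mem_of_mem_closure_union (fun _ ha => ha.1) (fun _ hy =>
    let ⟨a, ha, hay⟩ := exists_mul_eq_one_of_mem_inverses hL hy
    ⟨a, ha, hay ▸ OneMemClass.one_mem S⟩) hx

lemma mem_fracIn_of_mul_mem (hL : 𝒜.IsGradedField) {a : L} (ha : a ∈ S) (hah : 𝒜.IsHomog a)
    (ha0 : a ≠ 0) (hax : a * x ∈ S) : x ∈ 𝒜.fracIn S := by
  rw [← one_mul x, ← hL.inverse_mul hah ha0, mul_assoc]
  exact MulMemClass.mul_mem (Subring.subset_closure (.inr ⟨a, ha, ha0, hah, rfl⟩))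
    (Subring.subset_closure (.inl hax))

lemma IsGradedSubring.fracIn (hS : 𝒜.IsGradedSubring S) (hL : 𝒜.IsGradedField) :
    𝒜.IsGradedSubfield (𝒜.fracIn S) := by
  refine ⟨fun x hx g => ?_, fun x hx hxh hx0 => ?_⟩ <;>
    obtain ⟨a, ⟨ha, hah, ha0⟩, hax⟩ := exists_mul_mem_of_mem_fracIn hL hx
  · obtain ⟨d, hd⟩ := id hah
    refine mem_fracIn_of_mul_mem hL ha hah ha0 ?_
    simpa only [𝒜.comp_mul_of_mem hd, inv_mul_cancel_left] using hS _ hax (d * g)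
  · refine mem_fracIn_of_mul_mem hL hax (hah.mul hxh) (hL.mul_ne_zero hah ha0 hx0) ?_
    rwa [mul_assoc, hL.mul_inverse hxh hx0, mul_one]

end FractionField

section TranscendenceBasis

variable {k l S T : Subring L} {x : L}

lemma isIntegral_fracIn_of_isAlgebraic (hL : 𝒜.IsGradedField) (hS : 𝒜.IsGradedSubring S)
    (hx : 𝒜.IsHomog x) (halg : IsAlgebraic S x) : IsIntegral (𝒜.fracIn S) x := by
  obtain ⟨p, hp, hpx⟩ := halg
  obtain ⟨q, hq, hqh, hqx, -⟩ := exists_isHomog_leadingCoeff_aeval_eq_zero hS hx hp hpx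
  have hq' : (q.leadingCoeff : L) ≠ 0 := fun h => hq (leadingCoeff_eq_zero.mp (Subtype.ext h))
  have hle : S ≤ 𝒜.fracIn S := le_closure_union
  have hinv : Ring.inverse (q.leadingCoeff : L) ∈ 𝒜.fracIn S :=
    Subring.subset_closure (.inr ⟨_, q.leadingCoeff.2, hq', hqh, rfl⟩)
  have hint : IsIntegral (𝒜.fracIn S) (q.leadingCoeff * x) :=
    isIntegral_mono_subring hle (isIntegral_leadingCoeff_smul q x hqx)
  rw [← one_mul x, ← hL.inverse_mul hqh hq', mul_assoc]
  exact (isIntegral_of_mem_subring hinv).mul hint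

lemma exists_algebraicIndependent_forall_isIntegral_fracIn (hL : 𝒜.IsGradedField)
    (hk : 𝒜.IsGradedSubring k) (hl : 𝒜.IsGradedSubring l) :
    ∃ s : Set L, s ⊆ l ∧ (∀ y ∈ s, 𝒜.IsHomog y) ∧ AlgebraicIndependent k ((↑) : s → L) ∧
      ∀ y ∈ l, IsIntegral (𝒜.fracIn (Subring.closure (k ∪ s))) y := by
  have := hL.1
  obtain ⟨s, -, hs⟩ :=
    exists_maximal_algebraicIndependent (R := k) ∅ {y | y ∈ l ∧ 𝒜.IsHomog y}
      (Set.empty_subset _)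
      ((algebraicIndependent_empty_iff k L).mpr (FaithfulSMul.algebraMap_injective k L))
  have hhomog : ∀ y ∈ s, 𝒜.IsHomog y := fun y hy => (hs.prop.2 hy).2
  refine ⟨s, fun y hy => (hs.prop.2 hy).1, hhomog, hs.prop.1, fun y hy => ?_⟩
  rw [← 𝒜.sum_comp_support y]
  exact IsIntegral.sum _ fun g _ =>
    isIntegral_fracIn_of_isAlgebraic hL (hk.closure_union hhomog) (isHomog_comp y g)
      (isAlgebraic_closure_union_of_maximal hs ⟨hl y hy g, isHomog_comp y g⟩)

lemma exists_isIntegral_mul_of_isIntegral_fracIn (hL : 𝒜.IsGradedField) (hST : S ≤ T)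
    (hl : ∀ y ∈ l, IsIntegral (𝒜.fracIn S) y)
    (hx : IsIntegral (Subring.closure (T ∪ (l : Set L))) x) :
    ∃ a ∈ nonzeroHomog hL S, IsIntegral T (a * x) := by
  refine exists_isIntegral_mul_of_isIntegral_closure_union (fun _ ha => hST ha.1)
    (s := {y | ∃ x ∈ S, x ≠ 0 ∧ 𝒜.IsHomog x ∧ y = Ring.inverse x}) (fun y hy => ?_) ?_
  · obtain ⟨a, ha, hay⟩ := exists_mul_eq_one_of_mem_inverses hL hy
    exact ⟨a, ha, hay ▸ OneMemClass.one_mem T⟩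
  · refine isIntegral_trans_subring (fun y hy => isIntegral_of_mem_closure ?_ hy) hx
    rintro z (hz | hz)
    · exact isIntegral_of_mem_subring (Subring.subset_closure (.inl hz))
    · exact isIntegral_mono_subring (closure_union_mono_left hST _) (hl z hz)

end TranscendenceBasis

section Descent

variable {ι : Type*} {k K l : Subring L} {A : ι → Subring L}

/-- The homogeneous elements of `K` which are integral over every `A i`: the candidate generators
of the algebra `A'` with `P_{K/k}{A'} = ⋃ i, P_{K/k}{A i}`. -/
def commonIntegral (𝒜 : GradedStr G L) (K : Subring L) (A : ι → Subring L) : Set L :=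
  {x | x ∈ K ∧ 𝒜.IsHomog x ∧ ∀ i, IsIntegral (A i) x}

variable {σ : Type*} {u : σ → L} {s : Finset L} {x : L}

lemma mem_closure_of_isIntegral_of_mem_fracIn (hL : 𝒜.IsGradedField) (hK : 𝒜.IsGradedSubfield K)
    (hu : ∀ i, 𝒜.IsHomog (u i)) (hind : AlgebraicIndependent K u) (hx : 𝒜.IsHomog x)
    (hxfrac : x ∈ 𝒜.fracIn (Subring.closure (K ∪ Set.range u)))
    (hint : IsIntegral (Subring.closure (K ∪ Set.range u)) x) :
    x ∈ Subring.closure (K ∪ Set.range u) := by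
  obtain ⟨a, ⟨ha, hah, ha0⟩, hax⟩ := exists_mul_mem_of_mem_fracIn hL hxfrac
  exact mem_closure_of_isIntegral_of_mul_mem hL hK hu hind hx hint hah ha0 ha hax

lemma mem_closure_commonIntegral_of_isIntegral [Nonempty ι] (hL : 𝒜.IsGradedField)
    (hK : 𝒜.IsGradedSubfield K) (hAK : ∀ i, A i ≤ K) (hu : ∀ i, 𝒜.IsHomog (u i))
    (hind : AlgebraicIndependent K u) (hx : 𝒜.IsHomog x)
    (hxfrac : x ∈ 𝒜.fracIn (Subring.closure (K ∪ Set.range u)))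
    (hint : ∀ i, IsIntegral (Subring.closure (A i ∪ Set.range u)) x) :
    x ∈ Subring.closure (𝒜.commonIntegral K A ∪ Set.range u) := by
  obtain ⟨i⟩ := ‹Nonempty ι›
  have hxK := mem_closure_of_isIntegral_of_mem_fracIn hL hK hu hind hx hxfrac <|
    isIntegral_mono_subring (closure_union_mono_left (hAK i) _) (hint i)
  obtain ⟨P, rfl⟩ := mem_closure_union_range_iff.mp hxK
  obtain ⟨Q, hQ, hQP⟩ := exists_isHomog_coeff_aeval_eq hK.1 hu P hx
  rw [← hQP] at hint ⊢
  refine MvPolynomial.eval₂_mem (fun m _ => Subring.subset_closure (.inl ?_))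
    fun i => Subring.subset_closure (.inr ⟨i, rfl⟩)
  exact ⟨(Q.coeff m).2, hQ m, fun j =>
    isIntegral_coeff_of_isIntegral_aeval (hAK j) hind (hint j) m⟩

-- The minimal polynomial of `x` over the graded field of fractions of `K[u]` has its coefficients
-- in the polynomial ring over the common integral elements.
lemma isIntegral_closure_commonIntegral_of_algebraicIndependent [Nonempty ι]
    (hL : 𝒜.IsGradedField) (hK : 𝒜.IsGradedSubfield K) (hAK : ∀ i, A i ≤ K)
    (hu : ∀ i, 𝒜.IsHomog (u i)) (hind : AlgebraicIndependent K u) (hx : 𝒜.IsHomog x)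
    (hint : ∀ i, IsIntegral (Subring.closure (A i ∪ Set.range u)) x) :
    IsIntegral (Subring.closure (𝒜.commonIntegral K A ∪ Set.range u)) x := by
  let F := 𝒜.fracIn (Subring.closure (K ∪ Set.range u))
  have hF : 𝒜.IsGradedSubfield F :=
    (hK.1.closure_union (by simpa using hu)).fracIn hL
  have hAF (i : ι) : Subring.closure (A i ∪ Set.range u) ≤ F :=
    (closure_union_mono_left (hAK i) _).trans le_closure_union
  have hxF : IsIntegral F x :=
    isIntegral_mono_subring (hAF _) (hint (Classical.arbitrary ι))
  refine isIntegral_of_monic_of_coeff_mem ((minpoly.monic hxF).map F.subtype) (fun n => ?_) ?_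
  · rw [coeff_map]
    exact mem_closure_commonIntegral_of_isIntegral hL hK hAK hu hind
      (isHomog_coeff_minpoly hL hF hx hxF n) ((minpoly F x).coeff n).2
      fun i => isIntegral_coeff_minpoly hL hF (hAF i) hx (hint i) n
  · rw [eval_map]
    exact minpoly.aeval F x

lemma isIntegral_closure_union_of_forall_mem {S : Subring L} (hL : 𝒜.IsGradedField)
    (hS : 𝒜.IsGradedSubring S) (hl : 𝒜.IsGradedSubring l) (hx : 𝒜.IsHomog x)
    (h : ∀ O, IsGVRofSubfield 𝒜 ⊤ O → l ≤ O → S ≤ O → x ∈ O) :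
    IsIntegral (Subring.closure (S ∪ (l : Set L))) x :=
  isIntegral_of_forall_mem_isGVRofSubfield hL isGradedSubfield_top (hS.closure_union_subring hl)
    le_top trivial hx fun O hO hSlO =>
      h O hO (fun _ hy => hSlO (Subring.subset_closure (.inr hy))) (le_closure_union.trans hSlO)

lemma isIntegral_closure_union_commonIntegral [Finite ι] [Nonempty ι] {O : Subring L}
    (hL : 𝒜.IsGradedField) (hk : 𝒜.IsGradedSubring k) (hK : 𝒜.IsGradedSubfield K)
    (hl : 𝒜.IsGradedSubfield l) (hkl : k ≤ l) (hkA : ∀ i, k ≤ A i) (hAK : ∀ i, A i ≤ K)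
    (hO : IsGVRofSubfield 𝒜 ⊤ O) (hlO : l ≤ O)
    (hmin : Minimal (fun O => IsGVRofSubfield 𝒜 K O ∧ k ≤ O) (O ⊓ K)) (hx : 𝒜.IsHomog x)
    (hint : ∀ i, IsIntegral (Subring.closure (A i ∪ (l : Set L))) x) :
    IsIntegral (Subring.closure (l ∪ 𝒜.commonIntegral K A)) x := by
  obtain ⟨s, hsl, hs, hind, hls⟩ :=
    exists_algebraicIndependent_forall_isIntegral_fracIn hL hk hl.1
  have hindK : AlgebraicIndependent K ((↑) : s → L) :=
    algebraicIndependent_of_minimal hL hO hk hK hl hkl hlO hmin (fun y => hs y y.2)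
      (fun y => hsl y.2) hind
  have hksl : Subring.closure (k ∪ s) ≤ l := Subring.closure_le.mpr (Set.union_subset hkl hsl)
  obtain ⟨a, ⟨has, hah, ha0⟩, ha⟩ : ∃ a ∈ nonzeroHomog hL (Subring.closure (k ∪ s)),
      ∀ i, IsIntegral (Subring.closure (A i ∪ s)) (a * x) := by
    have hle (i : ι) : Subring.closure (k ∪ s) ≤ Subring.closure (A i ∪ s) :=
      closure_union_mono_left (hkA i) s
    refine exists_forall_of_forall_exists (fun i a ha b hb => ?_) fun i =>
      exists_isIntegral_mul_of_isIntegral_fracIn hL (hle i) hls ?_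
    · exact mul_assoc a b x ▸ (isIntegral_of_mem_subring (hle i ha.1)).mul hb
    · exact isIntegral_mono_subring (closure_union_mono_left le_closure_union _) (hint i)
  have hint' : IsIntegral (Subring.closure (𝒜.commonIntegral K A ∪ s)) (a * x) := by
    have hrange : Set.range ((↑) : s → L) = s := Subtype.range_coe
    have := isIntegral_closure_commonIntegral_of_algebraicIndependent hL hK hAK
      (fun y : s => hs y y.2) hindK (hah.mul hx) (by rwa [hrange])
    rwa [hrange] at this
  have hainv : Ring.inverse a ∈ l := hl.2 a (hksl has) hah ha0
  rw [← one_mul x, ← hL.inverse_mul hah ha0, mul_assoc]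
  refine (isIntegral_of_mem_subring (le_closure_union hainv)).mul (isIntegral_mono_subring ?_ hint')
  exact Subring.closure_mono (Set.union_comm _ _ ▸ Set.union_subset_union_left _ hsl)

lemma closure_union_le_of_subset_commonIntegral {O : Subring L} {i : ι} (hL : 𝒜.IsGradedField)
    (hO : IsGVRofSubfield 𝒜 K O) (hkO : k ≤ O) (hAO : A i ≤ O) {s : Set L}
    (hs : s ⊆ 𝒜.commonIntegral K A) : Subring.closure (k ∪ s) ≤ O :=
  Subring.closure_le.mpr <| Set.union_subset hkO fun _ hx =>
    have ⟨hxK, hxh, hint⟩ := hs hx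
    hO.mem_of_isIntegral hL hxK hxh (isIntegral_mono_subring hAO (hint i))

lemma exists_finset_subset_commonIntegral_forall_isIntegral
    (hs : ∀ x ∈ s, IsIntegral (Subring.closure (l ∪ 𝒜.commonIntegral K A)) x) :
    ∃ t : Finset L, ↑t ⊆ 𝒜.commonIntegral K A ∧
      ∀ x ∈ s, IsIntegral (Subring.closure ((l : Set L) ∪ t)) x := by
  classical
  choose! t ht hint using fun x hx => exists_finset_isIntegral_closure_union (l : Set L) (hs x hx)
  refine ⟨s.biUnion t, ?_,
    fun x hx => isIntegral_mono_subring (Subring.closure_mono ?_) (hint x hx)⟩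
  · rw [Finset.coe_biUnion]
    exact Set.iUnion₂_subset ht
  · exact Set.union_subset_union_right _
      (Finset.coe_subset.mpr (Finset.subset_biUnion_of_mem t hx))

end Descent

end GradedStr

open GradedStr in
theorem affineness_descends_general
    {G : Type u} [CommGroup G] {L : Type v} [CommRing L]
    (𝒜 : GradedStr G L) (hL : 𝒜.IsGradedField)
    (k K l : Subring L)
    (hk : 𝒜.IsGradedSubfield k) (hK : 𝒜.IsGradedSubfield K)
    (hl : 𝒜.IsGradedSubfield l) (hkK : k ≤ K) (hkl : k ≤ l)
    (hsurj : ∀ O' : Subring L, IsGVRofSubfield 𝒜 K O' → k ≤ O' →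
      ∃ O : Subring L, (IsGVRofSubfield 𝒜 ⊤ O ∧ l ≤ O) ∧ O ⊓ K = O')
    {ι : Type*} [Finite ι] (A : ι → Subring L)
    (hA : ∀ i, k ≤ A i ∧ A i ≤ K ∧ 𝒜.IsGradedSubring (A i))
    (s : Finset L) (hs : ∀ b ∈ s, 𝒜.IsHomog b)
    (hpre : ∀ O : Subring L, IsGVRofSubfield 𝒜 ⊤ O → l ≤ O →
      ((∃ i, A i ≤ O ⊓ K) ↔ Subring.closure (↑l ∪ ↑s) ≤ O)) :
    ∃ A' : Subring L, k ≤ A' ∧ A' ≤ K ∧ 𝒜.IsGradedSubring A' ∧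
      (∃ s : Finset L, (∀ a ∈ s, 𝒜.IsHomog a) ∧ A' = Subring.closure (↑k ∪ ↑s)) ∧
      ∀ O' : Subring L, IsGVRofSubfield 𝒜 K O' → k ≤ O' →
        ((∃ i, A i ≤ O') ↔ A' ≤ O') := by
  have hne : Nonempty ι := ((hpre ⊤ ⟨le_rfl, fun _ _ _ => trivial, fun _ _ _ _ => .inl trivial⟩
    le_top).mpr le_top).nonempty
  obtain ⟨O', hO'⟩ := 𝒜.exists_minimal_isGVRofSubfield hK hkK
  obtain ⟨O, ⟨hO, hlO⟩, rfl⟩ := hsurj O' hO'.prop.1 hO'.prop.2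
  have hint (i : ι) (b : L) (hb : b ∈ s) : IsIntegral (Subring.closure (A i ∪ (l : Set L))) b :=
    isIntegral_closure_union_of_forall_mem hL (hA i).2.2 hl.1 (hs b hb) fun O hO hlO hAO =>
      (hpre O hO hlO).mp ⟨i, le_inf hAO (hA i).2.1⟩ (Subring.subset_closure (.inr hb))
  obtain ⟨t, ht, hst⟩ := exists_finset_subset_commonIntegral_forall_isIntegral fun b hb =>
    isIntegral_closure_union_commonIntegral hL hk.1 hK hl hkl (fun i => (hA i).1)
      (fun i => (hA i).2.1) hO hlO hO' (hs b hb) fun i => hint i b hb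
  have hth : ∀ a ∈ t, 𝒜.IsHomog a := fun a ha => (ht ha).2.1
  refine ⟨Subring.closure (k ∪ t), le_closure_union,
    Subring.closure_le.mpr (Set.union_subset hkK fun a ha => (ht ha).1), hk.1.closure_union hth,
    ⟨t, hth, rfl⟩, fun O' hO' hkO' => ⟨fun ⟨i, hi⟩ => ?_, fun htO' => ?_⟩⟩
  · exact closure_union_le_of_subset_commonIntegral hL hO' hkO' hi ht
  · obtain ⟨O, ⟨hO, hlO⟩, rfl⟩ := hsurj O' hO' hkO'
    have htO : Subring.closure (l ∪ t) ≤ O := Subring.closure_le.mpr <|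
      Set.union_subset hlO fun a ha => (htO' (Subring.subset_closure (.inr ha))).1
    exact (hpre O hO hlO).mpr <| Subring.closure_le.mpr <| Set.union_subset hlO fun b hb =>
      hO.mem_of_isIntegral hL trivial (hs b hb) (isIntegral_mono_subring htO (hst b hb))

/-- **descent of affineness for graded birational spaces.**
Let `L` be a `G`-graded field with graded subfields `k ⊆ K ⊆ L` and `k ⊆ l ⊆ L`, and
suppose the restriction map `ψ : P_{L/l} → P_{K/k}`, `O ↦ O ∩ K`, is surjective.  Let
`X ⊆ P_{K/k}` be a finite union of affine subsets `P_{K/k}{A_i}` with each `A_i` a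
finitely generated graded `k`-subalgebra of `K`.  If the preimage `ψ⁻¹(X)` is affine,
`ψ⁻¹(X) = P_{L/l}{B}` for a finitely generated graded `l`-subalgebra `B` of `L`, then
`X` itself is affine: `X = P_{K/k}{A}` for some finitely generated graded
`k`-subalgebra `A` of `K`. -/
theorem affineness_descends
    {G : Type u} [CommGroup G] {L : Type v} [CommRing L]
    (𝒜 : GradedStr G L) (hL : 𝒜.IsGradedField)
    (k K l : Subring L)
    (hk : 𝒜.IsGradedSubfield k) (hK : 𝒜.IsGradedSubfield K)
    (hl : 𝒜.IsGradedSubfield l) (hkK : k ≤ K) (hkl : k ≤ l)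
    (hsurj : ∀ O' : Subring L, IsGVRofSubfield 𝒜 K O' → k ≤ O' →
      ∃ O : Subring L, (IsGVRofSubfield 𝒜 ⊤ O ∧ l ≤ O) ∧ O ⊓ K = O')
    (n : ℕ) (A : Fin n → Subring L)
    (hA : ∀ i, k ≤ A i ∧ A i ≤ K ∧ 𝒜.IsGradedSubring (A i) ∧
      ∃ s : Finset L, (∀ a ∈ s, 𝒜.IsHomog a) ∧ A i = Subring.closure (↑k ∪ ↑s))
    (B : Subring L)
    (hB : l ≤ B ∧ 𝒜.IsGradedSubring B ∧
      ∃ s : Finset L, (∀ a ∈ s, 𝒜.IsHomog a) ∧ B = Subring.closure (↑l ∪ ↑s))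
    (hpre : ∀ O : Subring L, IsGVRofSubfield 𝒜 ⊤ O → l ≤ O →
      ((∃ i, A i ≤ O ⊓ K) ↔ B ≤ O)) :
    ∃ A' : Subring L, k ≤ A' ∧ A' ≤ K ∧ 𝒜.IsGradedSubring A' ∧
      (∃ s : Finset L, (∀ a ∈ s, 𝒜.IsHomog a) ∧ A' = Subring.closure (↑k ∪ ↑s)) ∧
      ∀ O' : Subring L, IsGVRofSubfield 𝒜 K O' → k ≤ O' →
        ((∃ i, A i ≤ O') ↔ A' ≤ O') := by
  obtain ⟨-, -, s, hs, rfl⟩ := hB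
  exact affineness_descends_general 𝒜 hL k K l hk hK hl hkK hkl hsurj A
    (fun i => ⟨(hA i).1, (hA i).2.1, (hA i).2.2.1⟩) s hs hpre
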